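/- arXiv:2201.12744 — 2 statements merged into one kernel-verified Lean document; each statement's English description precedes it below -/
import Mathlib

section
/- Assume f satisfies lim_{R→∞} f(R, R, …, R) = ∞. Suppose u ∈ USC ∩ L^∞([0,T) × cl(Ω)) is a viscosity subsolution and v ∈ LSC ∩ L^∞([0,T) × cl(Ω)) is a viscosity supersolution of F(Hw) = e^{∂_t w + G(t,z,w)} g(z) in Ω_T. Then sup_{Ω_T} (u − v) ≤ sup_{∂_P Ω_T} (u − v)₊, where ∂_P Ω_T = ({0} × cl(Ω)) ∪ ((0,T) × ∂Ω) and (·)₊ = max(·, 0). -/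
open Filter Topology Set

noncomputable section

/-- The `l`-th elementary symmetric polynomial of `x ∈ ℝⁿ`. -/
def esym (n l : ℕ) (x : Fin n → ℝ) : ℝ :=
  ∑ s ∈ Finset.powersetCard l (Finset.univ : Finset (Fin n)), ∏ i ∈ s, x i

/-- The cone `Γ_k = {x ∈ ℝⁿ : σ_l(x) > 0 for all 1 ≤ l ≤ k}`. -/
def GammaK (n k : ℕ) : Set (Fin n → ℝ) :=
  {x | ∀ l, 1 ≤ l → l ≤ k → 0 < esym n l x}

/-- `Γ ⊊ ℝⁿ` is an open, convex, symmetric cone with vertex `0` and `Γₙ ⊆ Γ ⊆ Γ₁`. -/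
def IsGammaCone (n : ℕ) (Γ : Set (Fin n → ℝ)) : Prop :=
  IsOpen Γ ∧ Convex ℝ Γ ∧ (∀ x ∈ Γ, ∀ t : ℝ, 0 < t → t • x ∈ Γ) ∧
    (∀ σ : Equiv.Perm (Fin n), ∀ x ∈ Γ, x ∘ σ ∈ Γ) ∧
    Γ ≠ Set.univ ∧ GammaK n n ⊆ Γ ∧ Γ ⊆ GammaK n 1

/-- `f : cl(Γ) → [0,∞)` symmetric, concave, strictly increasing in each variable,
vanishing on `∂Γ`. -/
def IsHessianDensity (n : ℕ) (Γ : Set (Fin n → ℝ)) (f : (Fin n → ℝ) → ℝ) : Prop :=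
  (∀ x ∈ closure Γ, 0 ≤ f x) ∧
    (∀ σ : Equiv.Perm (Fin n), ∀ x ∈ closure Γ, f (x ∘ σ) = f x) ∧
    ConcaveOn ℝ (closure Γ) f ∧
    (∀ x ∈ closure Γ, ∀ y ∈ closure Γ, (∀ i, x i ≤ y i) → x ≠ y → f x < f y) ∧
    (∀ x ∈ frontier Γ, f x = 0)

/-- The complex Hessian `(∂²u/∂z_j∂z̄_k)_{j,k}` of a real-valued function on `ℂⁿ`,
computed from the real second derivative. -/
def complexHessian {n : ℕ} (u : (Fin n → ℂ) → ℝ) (z : Fin n → ℂ) :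
    Matrix (Fin n) (Fin n) ℂ := fun j k =>
  (((iteratedFDeriv ℝ 2 u z ![Pi.single j 1, Pi.single k 1] +
        iteratedFDeriv ℝ 2 u z ![Pi.single j Complex.I, Pi.single k Complex.I]) / 4 : ℝ) : ℂ) +
    Complex.I *
      (((iteratedFDeriv ℝ 2 u z ![Pi.single j 1, Pi.single k Complex.I] -
          iteratedFDeriv ℝ 2 u z ![Pi.single j Complex.I, Pi.single k 1]) / 4 : ℝ) : ℂ)

open Classical in
/-- `F(H) = f(λ(H))` if `λ(H) ∈ cl(Γ)` and `F(H) = −∞` otherwise. -/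
def Fop {n : ℕ} (f : (Fin n → ℝ) → ℝ) (Γ : Set (Fin n → ℝ))
    (A : Matrix (Fin n) (Fin n) ℂ) : EReal :=
  if h : A.IsHermitian then
    if h.eigenvalues ∈ closure Γ then ((f h.eigenvalues : ℝ) : EReal) else ⊥
  else ⊥

/-- An upper test function (C¹ in t, C² in z near `p₀`) for `u` at `p₀`. -/
def IsUpperTestAt {n : ℕ} (u q : ℝ × (Fin n → ℂ) → ℝ) (p₀ : ℝ × (Fin n → ℂ)) : Prop :=
  q p₀ = u p₀ ∧ (∀ᶠ p in 𝓝 p₀, u p ≤ q p) ∧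
    ∀ᶠ p in 𝓝 p₀, DifferentiableAt ℝ (fun t => q (t, p.2)) p.1 ∧
      ContDiffAt ℝ 2 (fun z => q (p.1, z)) p.2

/-- A lower test function (C¹ in t, C² in z near `p₀`) for `v` at `p₀`. -/
def IsLowerTestAt {n : ℕ} (v q : ℝ × (Fin n → ℂ) → ℝ) (p₀ : ℝ × (Fin n → ℂ)) : Prop :=
  q p₀ = v p₀ ∧ (∀ᶠ p in 𝓝 p₀, q p ≤ v p) ∧
    ∀ᶠ p in 𝓝 p₀, DifferentiableAt ℝ (fun t => q (t, p.2)) p.1 ∧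
      ContDiffAt ℝ 2 (fun z => q (p.1, z)) p.2

/-- Viscosity subsolution of `F(Hw) = e^{∂ₜw + G(t,z,w)} g(z)` on `D`. -/
def ParSubsolOn {n : ℕ} (f : (Fin n → ℝ) → ℝ) (Γ : Set (Fin n → ℝ))
    (G : ℝ → (Fin n → ℂ) → ℝ → ℝ) (g : (Fin n → ℂ) → ℝ)
    (D : Set (ℝ × (Fin n → ℂ))) (u : ℝ × (Fin n → ℂ) → ℝ) : Prop :=
  UpperSemicontinuousOn u D ∧
    ∀ p₀ ∈ D, ∀ q, IsUpperTestAt u q p₀ →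
      ((Real.exp (deriv (fun t => q (t, p₀.2)) p₀.1 + G p₀.1 p₀.2 (q p₀)) * g p₀.2 : ℝ) : EReal)
        ≤ Fop f Γ (complexHessian (fun z => q (p₀.1, z)) p₀.2)

/-- Viscosity supersolution of `F(Hw) = e^{∂ₜw + G(t,z,w)} g(z)` on `D`. -/
def ParSupersolOn {n : ℕ} (f : (Fin n → ℝ) → ℝ) (Γ : Set (Fin n → ℝ))
    (G : ℝ → (Fin n → ℂ) → ℝ → ℝ) (g : (Fin n → ℂ) → ℝ)
    (D : Set (ℝ × (Fin n → ℂ))) (v : ℝ × (Fin n → ℂ) → ℝ) : Prop :=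
  LowerSemicontinuousOn v D ∧
    ∀ p₀ ∈ D, ∀ q, IsLowerTestAt v q p₀ →
      Fop f Γ (complexHessian (fun z => q (p₀.1, z)) p₀.2)
        ≤ ((Real.exp (deriv (fun t => q (t, p₀.2)) p₀.1 + G p₀.1 p₀.2 (q p₀)) * g p₀.2 : ℝ) : EReal)

/-- Upper semicontinuous envelope relative to `D`. -/
def uscEnvOn {X : Type*} [TopologicalSpace X] (D : Set X) (w : X → ℝ) (x : X) : ℝ :=
  Filter.limsup w (𝓝[D] x)

/-- Lower semicontinuous envelope relative to `D`. -/
def lscEnvOn {X : Type*} [TopologicalSpace X] (D : Set X) (w : X → ℝ) (x : X) : ℝ :=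
  Filter.liminf w (𝓝[D] x)

/-- Sup-convolution in time `u^k`. -/
def supConv {n : ℕ} (u : ℝ × (Fin n → ℂ) → ℝ) (A k : ℝ) (p : ℝ × (Fin n → ℂ)) : ℝ :=
  sSup ((fun s : ℝ => u (p.1 + s, p.2) - k * |s|) '' Set.Icc (-(A / k)) (A / k))

/-- Inf-convolution in time `u_k`. -/
def infConv {n : ℕ} (u : ℝ × (Fin n → ℂ) → ℝ) (A k : ℝ) (p : ℝ × (Fin n → ℂ)) : ℝ :=
  sInf ((fun s : ℝ => u (p.1 + s, p.2) + k * |s|) '' Set.Icc (-(A / k)) (A / k))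

/-- Parabolic superjet `𝒫^{2,+} u (p₀)`; `p` and `Q` are the ℝ-linear first- and
second-order data on `ℂⁿ ≅ ℝ^{2n}`. -/
def InParSuperjet {n : ℕ} (u : ℝ × (Fin n → ℂ) → ℝ) (p₀ : ℝ × (Fin n → ℂ)) (τ : ℝ)
    (p : (Fin n → ℂ) →ₗ[ℝ] ℝ) (Q : (Fin n → ℂ) →ₗ[ℝ] (Fin n → ℂ) →ₗ[ℝ] ℝ) : Prop :=
  ∀ ε > 0, ∀ᶠ x in 𝓝 p₀,
    u x ≤ u p₀ + τ * (x.1 - p₀.1) + p (x.2 - p₀.2) +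
      (1 / 2) * Q (x.2 - p₀.2) (x.2 - p₀.2) + ε * (|x.1 - p₀.1| + ‖x.2 - p₀.2‖ ^ 2)

/-- Parabolic subjet `𝒫^{2,−} v (p₀) = −𝒫^{2,+}(−v)(p₀)`. -/
def InParSubjet {n : ℕ} (v : ℝ × (Fin n → ℂ) → ℝ) (p₀ : ℝ × (Fin n → ℂ)) (τ : ℝ)
    (p : (Fin n → ℂ) →ₗ[ℝ] ℝ) (Q : (Fin n → ℂ) →ₗ[ℝ] (Fin n → ℂ) →ₗ[ℝ] ℝ) : Prop :=
  InParSuperjet (fun x => -(v x)) p₀ (-τ) (-p) (-Q)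

/-- An upper test function (C² near `z₀`) for `ψ` at `z₀` (elliptic case). -/
def IsUpperTestAtE {n : ℕ} (ψ q : (Fin n → ℂ) → ℝ) (z₀ : Fin n → ℂ) : Prop :=
  q z₀ = ψ z₀ ∧ (∀ᶠ z in 𝓝 z₀, ψ z ≤ q z) ∧ ContDiffAt ℝ 2 q z₀

/-- A lower test function (C² near `z₀`) for `ψ` at `z₀` (elliptic case). -/
def IsLowerTestAtE {n : ℕ} (ψ q : (Fin n → ℂ) → ℝ) (z₀ : Fin n → ℂ) : Prop :=
  q z₀ = ψ z₀ ∧ (∀ᶠ z in 𝓝 z₀, q z ≤ ψ z) ∧ ContDiffAt ℝ 2 q z₀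

/-- `ψ` is `Γ`-subharmonic on `D` in the viscosity sense: `F(Hψ) ≥ 0`. -/
def GammaSubharmonicOn {n : ℕ} (Γ : Set (Fin n → ℝ)) (D : Set (Fin n → ℂ))
    (ψ : (Fin n → ℂ) → ℝ) : Prop :=
  ∀ z₀ ∈ D, ∀ q, IsUpperTestAtE ψ q z₀ →
    ∃ hh : (complexHessian q z₀).IsHermitian, hh.eigenvalues ∈ closure Γ

/-- Viscosity subsolution of the elliptic equation `e^{K(z,ψ)} − F(Hψ) = 0` on `D`,
where the right-hand side `K z₀ (q z₀)` may depend on the tested value. -/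
def EllSubsolOn {n : ℕ} (f : (Fin n → ℝ) → ℝ) (Γ : Set (Fin n → ℝ))
    (K : (Fin n → ℂ) → ℝ → ℝ) (D : Set (Fin n → ℂ)) (ψ : (Fin n → ℂ) → ℝ) : Prop :=
  UpperSemicontinuousOn ψ D ∧
    ∀ z₀ ∈ D, ∀ q, IsUpperTestAtE ψ q z₀ →
      ((K z₀ (q z₀) : ℝ) : EReal) ≤ Fop f Γ (complexHessian q z₀)

/-- Viscosity subsolution of the time-derivative-free parabolic equation
`e^{H(t,z,w)} h(t,z) − F(Hw) = 0` on `D`. -/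
def ParSubsolNoDtOn {n : ℕ} (f : (Fin n → ℝ) → ℝ) (Γ : Set (Fin n → ℝ))
    (Hf : ℝ → (Fin n → ℂ) → ℝ → ℝ) (h : ℝ × (Fin n → ℂ) → ℝ)
    (D : Set (ℝ × (Fin n → ℂ))) (w : ℝ × (Fin n → ℂ) → ℝ) : Prop :=
  UpperSemicontinuousOn w D ∧
    ∀ p₀ ∈ D, ∀ q, IsUpperTestAt w q p₀ →
      ((Real.exp (Hf p₀.1 p₀.2 (q p₀)) * h p₀ : ℝ) : EReal)
        ≤ Fop f Γ (complexHessian (fun z => q (p₀.1, z)) p₀.2)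

/-- Subsolution of the Cauchy–Dirichlet problem. -/
def CDSubsol {n : ℕ} (f : (Fin n → ℝ) → ℝ) (Γ : Set (Fin n → ℝ))
    (G : ℝ → (Fin n → ℂ) → ℝ → ℝ) (g : (Fin n → ℂ) → ℝ)
    (Ω : Set (Fin n → ℂ)) (T : ℝ) (φ : ℝ → (Fin n → ℂ) → ℝ)
    (u₀ : (Fin n → ℂ) → ℝ) (u : ℝ × (Fin n → ℂ) → ℝ) : Prop :=
  UpperSemicontinuousOn u (Set.Ico 0 T ×ˢ closure Ω) ∧
    ParSubsolOn f Γ G g (Set.Ioo 0 T ×ˢ Ω) u ∧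
    (∀ t ∈ Set.Ico (0 : ℝ) T, ∀ z ∈ frontier Ω, u (t, z) ≤ φ t z) ∧
    (∀ z ∈ closure Ω, u (0, z) ≤ u₀ z)

/-- Supersolution of the Cauchy–Dirichlet problem. -/
def CDSupersol {n : ℕ} (f : (Fin n → ℝ) → ℝ) (Γ : Set (Fin n → ℝ))
    (G : ℝ → (Fin n → ℂ) → ℝ → ℝ) (g : (Fin n → ℂ) → ℝ)
    (Ω : Set (Fin n → ℂ)) (T : ℝ) (φ : ℝ → (Fin n → ℂ) → ℝ)
    (u₀ : (Fin n → ℂ) → ℝ) (v : ℝ × (Fin n → ℂ) → ℝ) : Prop :=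
  LowerSemicontinuousOn v (Set.Ico 0 T ×ˢ closure Ω) ∧
    ParSupersolOn f Γ G g (Set.Ioo 0 T ×ˢ Ω) v ∧
    (∀ t ∈ Set.Ico (0 : ℝ) T, ∀ z ∈ frontier Ω, φ t z ≤ v (t, z)) ∧
    (∀ z ∈ closure Ω, u₀ z ≤ v (0, z))

/-- `ε`-subbarrier for the Cauchy–Dirichlet problem. -/
def SubBarrier {n : ℕ} (f : (Fin n → ℝ) → ℝ) (Γ : Set (Fin n → ℝ))
    (G : ℝ → (Fin n → ℂ) → ℝ → ℝ) (g : (Fin n → ℂ) → ℝ)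
    (Ω : Set (Fin n → ℂ)) (T : ℝ) (φ : ℝ → (Fin n → ℂ) → ℝ)
    (u₀ : (Fin n → ℂ) → ℝ) (ε : ℝ) (u : ℝ × (Fin n → ℂ) → ℝ) : Prop :=
  UpperSemicontinuousOn u (Set.Ico 0 T ×ˢ closure Ω) ∧
    ParSubsolOn f Γ G g (Set.Ioo 0 T ×ˢ Ω) u ∧
    (∀ z ∈ closure Ω,
      u₀ z - ε ≤ lscEnvOn (Set.Ico 0 T ×ˢ closure Ω) u (0, z) ∧
        lscEnvOn (Set.Ico 0 T ×ˢ closure Ω) u (0, z) ≤ u (0, z) ∧ u (0, z) ≤ u₀ z) ∧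
    (∀ t ∈ Set.Ico (0 : ℝ) T, ∀ z ∈ frontier Ω,
      φ t z - ε ≤ lscEnvOn (Set.Ico 0 T ×ˢ closure Ω) u (t, z) ∧
        lscEnvOn (Set.Ico 0 T ×ˢ closure Ω) u (t, z) ≤ u (t, z) ∧ u (t, z) ≤ φ t z)

/-- `ε`-superbarrier for the Cauchy–Dirichlet problem. -/
def SuperBarrier {n : ℕ} (f : (Fin n → ℝ) → ℝ) (Γ : Set (Fin n → ℝ))
    (G : ℝ → (Fin n → ℂ) → ℝ → ℝ) (g : (Fin n → ℂ) → ℝ)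
    (Ω : Set (Fin n → ℂ)) (T : ℝ) (φ : ℝ → (Fin n → ℂ) → ℝ)
    (u₀ : (Fin n → ℂ) → ℝ) (ε : ℝ) (v : ℝ × (Fin n → ℂ) → ℝ) : Prop :=
  LowerSemicontinuousOn v (Set.Ico 0 T ×ˢ closure Ω) ∧
    ParSupersolOn f Γ G g (Set.Ioo 0 T ×ˢ Ω) v ∧
    (∀ z ∈ closure Ω,
      uscEnvOn (Set.Ico 0 T ×ˢ closure Ω) v (0, z) ≤ u₀ z + ε ∧
        v (0, z) ≤ uscEnvOn (Set.Ico 0 T ×ˢ closure Ω) v (0, z) ∧ u₀ z ≤ v (0, z)) ∧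
    (∀ t ∈ Set.Ico (0 : ℝ) T, ∀ z ∈ frontier Ω,
      uscEnvOn (Set.Ico 0 T ×ˢ closure Ω) v (t, z) ≤ φ t z + ε ∧
        v (t, z) ≤ uscEnvOn (Set.Ico 0 T ×ˢ closure Ω) v (t, z) ∧ φ t z ≤ v (t, z))

/-- Lipschitz in the time variable, uniformly on `[0,T) × cl(Ω)`. -/
def LipschitzInT {n : ℕ} (Ω : Set (Fin n → ℂ)) (T : ℝ) (u : ℝ × (Fin n → ℂ) → ℝ) : Prop :=
  ∃ L : ℝ, ∀ t₁ ∈ Set.Ico (0 : ℝ) T, ∀ t₂ ∈ Set.Ico (0 : ℝ) T, ∀ z ∈ closure Ω,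
    |u (t₁, z) - u (t₂, z)| ≤ L * |t₁ - t₂|

/-- The pair `(u₀, g)` is admissible. -/
def Admissible {n : ℕ} (f : (Fin n → ℝ) → ℝ) (Γ : Set (Fin n → ℝ))
    (Ω : Set (Fin n → ℂ)) (g u₀ : (Fin n → ℂ) → ℝ) : Prop :=
  ∀ ε > 0, ∃ uε : (Fin n → ℂ) → ℝ, ∃ Cε > 0,
    ContinuousOn uε (closure Ω) ∧ (∀ z ∈ closure Ω, u₀ z ≤ uε z ∧ uε z ≤ u₀ z + ε) ∧
      ∀ z₀ ∈ Ω, ∀ q, IsLowerTestAtE uε q z₀ →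
        Fop f Γ (complexHessian q z₀) ≤ ((Real.exp Cε * g z₀ : ℝ) : EReal)

/-- `Ω` is a strictly `Γ`-pseudoconvex domain. -/
def StrictlyGammaPseudoconvex {n : ℕ} (Γ : Set (Fin n → ℝ)) (Ω : Set (Fin n → ℂ)) : Prop :=
  ∃ ρ : (Fin n → ℂ) → ℝ, ContDiff ℝ (⊤ : ℕ∞) ρ ∧
    (∀ z ∈ closure Ω, ∃ hh : (complexHessian ρ z).IsHermitian, hh.eigenvalues ∈ Γ) ∧
    (∀ z ∈ frontier Ω, ρ z = 0) ∧ (∀ z ∈ Ω, ρ z < 0) ∧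
    ∀ z ∈ frontier Ω, fderiv ℝ ρ z ≠ 0

end

/-!
Suppose `u - v` exceeds its bound `M ≥ 0` on the parabolic boundary. Add to `u` a small multiple
of `|z|²` and the barrier `-η / (T - t)`: the excess survives, and `u` becomes strict. Then double
the variables and maximise `u a - v b - B (a - b, a - b) / 2` with `B = K t² + j |z|²`.

The second-order information at the maximum comes from a Jensen–Ishii argument which avoids
Alexandrov's theorem. For generic linear perturbations, the sum of the sup-convolutions of the two
functions has a maximum, where each of them is touched quadratically from both sides. The slopes at
such contact points are Lipschitz, and the contact set has positive measure because a Lipschitz map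
recovers the perturbation from it. Rademacher's theorem at a density point yields a second-order
expansion.

Concavity of `f` turns the gained multiple `c` of the identity matrix into
`F (H + c) ≥ (1 - δ) F H + δ f (c / δ, …, c / δ)`. Letting `j → ∞` with `K` fixed keeps the
exponential factors bounded and makes the two values of `g` agree; then, for `K` large, the gain
from `η` absorbs both the factor `1 - δ` and the oscillation of `G`, so that
`0 < δ f (c / δ, …, c / δ) ≤ 0`.
-/

open Metric MeasureTheory Asymptotics
open scoped NNReal MeasureTheory Pointwise

section QuadraticContact

variable {E : Type*} [NormedAddCommGroup E] [NormedSpace ℝ E]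

/-- `U` is touched at every point `k ∈ K`, from above and from below, by paraboloids of opening
`C` with the common slope `ℓ k`. -/
def HasQuadraticContactOn (U : E → ℝ) (ℓ : E → E →L[ℝ] ℝ) (C : ℝ≥0) (K : Set E) : Prop :=
  ∀ k ∈ K, ∀ y, |U y - U k - ℓ k (y - k)| ≤ C * ‖y - k‖ ^ 2

/-- The error at `y` of the second-order expansion of `U` at `x` with gradient `L` and
Hessian `A`. -/
noncomputable def quadraticRemainder (U : E → ℝ) (L : E →L[ℝ] ℝ) (A : E →L[ℝ] E →L[ℝ] ℝ)
    (x y : E) : ℝ :=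
  U y - U x - L (y - x) - (1 / 2) * A (y - x) (y - x)

/-- `U` has at `x` the second-order Taylor expansion with gradient `L` and Hessian `A`. Unlike
twice differentiability, this says nothing about the gradient of `U` near `x`. -/
def HasQuadraticExpansionAt (U : E → ℝ) (L : E →L[ℝ] ℝ) (A : E →L[ℝ] E →L[ℝ] ℝ) (x : E) : Prop :=
  (fun y => quadraticRemainder U L A x y) =o[𝓝 x] fun y => ‖y - x‖ ^ 2

variable {U : E → ℝ} {ℓ : E → E →L[ℝ] ℝ} {C : ℝ≥0} {K : Set E}

lemma opNorm_le_of_forall_norm_eq {M r : ℝ} (hM : 0 ≤ M) (hr : 0 < r) (L : E →L[ℝ] ℝ)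
    (hL : ∀ h, ‖h‖ = r → |L h| ≤ M * r) : ‖L‖ ≤ M := by
  refine ContinuousLinearMap.opNorm_le_of_unit_norm hM fun w hw => ?_
  have hrw := hL (r • w) (by rw [norm_smul, hw, mul_one, Real.norm_of_nonneg hr.le])
  rw [map_smul, smul_eq_mul, abs_mul, abs_of_pos hr, mul_comm] at hrw
  exact le_of_mul_le_mul_right hrw hr

lemma HasQuadraticContactOn.lipschitzOnWith (hU : HasQuadraticContactOn U ℓ C K) :
    LipschitzOnWith (6 * C) ℓ K := by
  refine LipschitzOnWith.of_dist_le_mul fun k hk k' hk' => ?_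
  rcases eq_or_ne k k' with rfl | hne
  · simp
  rw [dist_eq_norm, dist_eq_norm, NNReal.coe_mul, NNReal.coe_ofNat]
  set d := ‖k - k'‖ with hd
  have hd0 : 0 < d := norm_pos_iff.mpr (sub_ne_zero.mpr hne)
  refine opNorm_le_of_forall_norm_eq (by positivity) hd0 _ fun h hh => ?_
  have hfar : |U (k' + h) - U k - ℓ k (k' + h - k)| ≤ C * (2 * d) ^ 2 := by
    refine (hU k hk _).trans ?_
    gcongr
    calc ‖k' + h - k‖ = ‖h - (k - k')‖ := by congr 1; abel
      _ ≤ ‖h‖ + ‖k - k'‖ := norm_sub_le _ _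
      _ = 2 * d := by rw [hh]; ring
  have hnear := hU k' hk' (k' + h)
  have hcross := hU k hk k'
  rw [add_sub_cancel_left, hh] at hnear
  rw [norm_sub_rev, ← hd] at hcross
  have hsplit : (ℓ k - ℓ k') h = (U (k' + h) - U k' - ℓ k' h)
      - (U (k' + h) - U k - ℓ k (k' + h - k)) + (U k' - U k - ℓ k (k' - k)) := by
    rw [show k' + h - k = (k' - k) + h by abel, map_add, sub_apply]; ring
  rw [abs_le] at hfar hnear hcross ⊢
  rw [hsplit]
  constructor <;> nlinarith

/-- Along rays from `x` the vectors `s` and `p - x` are parallel, which gives `hsymm`. -/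
lemma HasQuadraticContactOn.abs_quadraticRemainder_add_sub_le {A : E →L[ℝ] E →L[ℝ] ℝ}
    {x k p s : E} {η : ℝ} (hU : HasQuadraticContactOn U ℓ C K) (hk : k ∈ K)
    (hsymm : A s (p - x) = A (p - x) s) (hpk : ‖p - k‖ ≤ ‖s‖)
    (hη : ‖ℓ k - ℓ x - A (k - x)‖ ≤ η) :
    |quadraticRemainder U (ℓ x) A x (p + s) - quadraticRemainder U (ℓ x) A x p| ≤
      (5 * C + 2 * ‖A‖) * ‖s‖ ^ 2 + η * ‖s‖ := by
  have hnew : |U (p + s) - U k - ℓ k (p + s - k)| ≤ C * (2 * ‖s‖) ^ 2 := by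
    refine (hU k hk _).trans ?_
    gcongr
    calc ‖p + s - k‖ = ‖(p - k) + s‖ := by congr 1; abel
      _ ≤ ‖p - k‖ + ‖s‖ := norm_add_le _ _
      _ ≤ 2 * ‖s‖ := by linarith
  have hold : |U p - U k - ℓ k (p - k)| ≤ C * ‖s‖ ^ 2 := (hU k hk p).trans (by gcongr)
  have hslope : |(ℓ k - ℓ x - A (k - x)) s| ≤ η * ‖s‖ :=
    ((ℓ k - ℓ x - A (k - x)).le_opNorm s).trans (by gcongr)
  have hshift : |A (p - k) s| ≤ ‖A‖ * ‖s‖ * ‖s‖ := (A.le_opNorm₂ _ s).trans (by gcongr)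
  have hsecond : |A s s| ≤ ‖A‖ * ‖s‖ * ‖s‖ := A.le_opNorm₂ s s
  have hsplit : quadraticRemainder U (ℓ x) A x (p + s) - quadraticRemainder U (ℓ x) A x p =
      (U (p + s) - U k - ℓ k (p + s - k)) - (U p - U k - ℓ k (p - k))
        + (ℓ k - ℓ x - A (k - x)) s - A (p - k) s - (1 / 2) * A s s := by
    rw [show A (p - k) s = A (p - x) s - A (k - x) s by
      rw [← sub_apply, ← map_sub, sub_sub_sub_cancel_right]]
    simp only [quadraticRemainder, show p + s - k = (p - k) + s by abel,
      show p + s - x = (p - x) + s by abel, map_add, add_apply,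
      sub_apply, hsymm]
    ring
  have hA : 0 ≤ ‖A‖ * ‖s‖ * ‖s‖ := by positivity
  rw [abs_le] at hnew hold hslope hshift hsecond ⊢
  rw [hsplit]
  constructor <;> linarith

/-- The ray from `x` to `y` is cut into `N` equal steps; the quadratic errors of the steps sum
up to `O(‖y - x‖² / N)`. -/
lemma HasQuadraticContactOn.abs_quadraticRemainder_le {A : E →L[ℝ] E →L[ℝ] ℝ} {x y : E} {N : ℕ}
    (hU : HasQuadraticContactOn U ℓ C K) (hN : N ≠ 0)
    (hK : ∀ i < N, ∃ k ∈ K, ‖x + (i / N : ℝ) • (y - x) - k‖ ≤ ‖y - x‖ / N ∧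
      ‖ℓ k - ℓ x - A (k - x)‖ ≤ ‖y - x‖ / N) :
    |quadraticRemainder U (ℓ x) A x y| ≤ (5 * C + 2 * ‖A‖ + 1) / N * ‖y - x‖ ^ 2 := by
  set p : ℕ → E := fun i => x + (i / N : ℝ) • (y - x) with hp
  set s : E := (1 / N : ℝ) • (y - x) with hs
  have hN0 : (N : ℝ) ≠ 0 := by exact_mod_cast hN
  have hsnorm : ‖s‖ = ‖y - x‖ / N := by
    rw [hs, norm_smul, Real.norm_of_nonneg (by positivity), one_div_mul_eq_div]
  have hstep : ∀ {i}, i < N → dist (quadraticRemainder U (ℓ x) A x (p i))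
      (quadraticRemainder U (ℓ x) A x (p (i + 1))) ≤ (5 * C + 2 * ‖A‖ + 1) * (‖y - x‖ / N) ^ 2 := by
    intro i hi
    obtain ⟨k, hkK, hpk, hkx⟩ := hK i hi
    have hnext : p (i + 1) = p i + s := by
      simp only [hp, hs]; push_cast; module
    have hsymm : A s (p i - x) = A (p i - x) s := by
      simp only [hp, hs, add_sub_cancel_left, map_smul, smul_apply,
        smul_eq_mul]
      ring
    rw [dist_comm, Real.dist_eq, hnext]
    refine (hU.abs_quadraticRemainder_add_sub_le hkK hsymm (hsnorm ▸ hpk) hkx).trans_eq ?_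
    rw [hsnorm]; ring
  have htotal := dist_le_range_sum_of_dist_le N hstep
  have hstart : quadraticRemainder U (ℓ x) A x (p 0) = 0 := by simp [hp, quadraticRemainder]
  have hend : p N = y := by simp [hp, hN0]
  rw [hstart, hend, dist_zero_left, Real.norm_eq_abs, Finset.sum_const, Finset.card_range,
    nsmul_eq_mul] at htotal
  refine htotal.trans_eq ?_
  field_simp

lemma eventually_exists_mem_near_with_linear_slope {A : E →L[ℝ] E →L[ℝ] ℝ} {x : E} {ε : ℝ}
    (hx : x ∈ K) (hA : HasFDerivWithinAt ℓ A K x)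
    (hK : (fun y => infDist y K) =o[𝓝 x] fun y => y - x) (hε : 0 < ε) (hε1 : ε ≤ 1) :
    ∀ᶠ y in 𝓝 x, ∀ p, ‖p - x‖ ≤ ‖y - x‖ →
      ∃ k ∈ K, ‖p - k‖ ≤ ε * ‖y - x‖ ∧ ‖ℓ k - ℓ x - A (k - x)‖ ≤ ε * ‖y - x‖ := by
  obtain ⟨ρ, hρ, hdist⟩ := eventually_nhds_iff_ball.mp (hK.def (half_pos hε))
  obtain ⟨ρ', hρ', hderiv⟩ := eventually_nhds_iff_ball.mp
    (eventually_nhdsWithin_iff.mp (hA.isLittleO.def (half_pos hε)))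
  refine eventually_nhds_iff_ball.mpr ⟨min ρ (ρ' / 2), by positivity, fun y hy p hpy => ?_⟩
  rw [mem_ball, lt_min_iff, dist_eq_norm] at hy
  rcases eq_or_ne y x with rfl | hyx
  · obtain rfl : p = y := by simpa [sub_eq_zero] using hpy
    exact ⟨p, hx, by simp⟩
  have hd : 0 < ‖y - x‖ := norm_pos_iff.mpr (sub_ne_zero.mpr hyx)
  have hpK : infDist p K < ε * ‖y - x‖ := by
    have hpd := hdist p (by rw [mem_ball, dist_eq_norm]; linarith)
    rw [Real.norm_of_nonneg infDist_nonneg] at hpd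
    nlinarith
  obtain ⟨k, hkK, hpk⟩ := (infDist_lt_iff ⟨x, hx⟩).mp hpK
  rw [dist_eq_norm] at hpk
  have hkx : ‖k - x‖ ≤ 2 * ‖y - x‖ := by
    nlinarith [norm_sub_le_norm_sub_add_norm_sub k p x, norm_sub_rev k p]
  refine ⟨k, hkK, hpk.le, ?_⟩
  calc ‖ℓ k - ℓ x - A (k - x)‖ ≤ ε / 2 * ‖k - x‖ :=
        hderiv k (by rw [mem_ball, dist_eq_norm]; linarith) hkK
    _ ≤ ε / 2 * (2 * ‖y - x‖) := by gcongr
    _ = ε * ‖y - x‖ := by ring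

lemma HasQuadraticContactOn.hasQuadraticExpansionAt {A : E →L[ℝ] E →L[ℝ] ℝ} {x : E}
    (hU : HasQuadraticContactOn U ℓ C K) (hx : x ∈ K) (hA : HasFDerivWithinAt ℓ A K x)
    (hK : (fun y => infDist y K) =o[𝓝 x] fun y => y - x) :
    HasQuadraticExpansionAt U (ℓ x) A x := by
  refine isLittleO_iff.mpr fun κ hκ => ?_
  obtain ⟨N, hN⟩ := exists_nat_gt ((5 * C + 2 * ‖A‖ + 1) / κ)
  have hN0 : 0 < (N : ℝ) := lt_of_le_of_lt (by positivity) hN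
  have hN1 : (1 : ℝ) ≤ N := by exact_mod_cast (Nat.cast_pos.mp hN0)
  filter_upwards [eventually_exists_mem_near_with_linear_slope hx hA hK (one_div_pos.mpr hN0)
    ((div_le_one hN0).mpr hN1)] with y hy
  rw [norm_pow, norm_norm, Real.norm_eq_abs]
  refine (hU.abs_quadraticRemainder_le (N := N) (by exact_mod_cast hN0.ne') fun i hi => ?_).trans
    (by gcongr; exact (div_le_comm₀ hκ hN0).mp hN.le)
  simp only [← one_div_mul_eq_div (N : ℝ) ‖y - x‖]
  refine hy _ ?_
  rw [add_sub_cancel_left, norm_smul, Real.norm_of_nonneg (by positivity)]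
  exact mul_le_of_le_one_left (norm_nonneg _) ((div_le_one hN0).mpr (by exact_mod_cast hi.le))

end QuadraticContact

section Density

lemma ae_isLittleO_infDist {X : Type*} [MetricSpace X] [SecondCountableTopology X]
    [MeasurableSpace X] [BorelSpace X] (μ : Measure X) [IsUnifLocDoublingMeasure μ]
    [IsLocallyFiniteMeasure μ] (K : Set X) :
    ∀ᵐ x ∂μ, x ∈ K → (fun y => infDist y K) =o[𝓝 x] fun y => dist y x := by
  filter_upwards [ae_all_iff.mpr fun m : ℕ => ae_imp_of_ae_restrict
    (IsUnifLocDoublingMeasure.ae_tendsto_measure_inter_div.{_, 0} μ K (m : ℝ))] with x hx hxK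
  by_contra hporous
  simp only [isLittleO_iff, not_forall, not_eventually, not_le,
    Real.norm_of_nonneg infDist_nonneg, Real.norm_of_nonneg dist_nonneg] at hporous
  obtain ⟨c, hc, hfreq⟩ := hporous
  obtain ⟨y, hyx, hy⟩ := exists_seq_forall_of_frequently hfreq
  have hne : ∀ j, y j ≠ x := fun j hj => by
    simpa [hj, infDist_zero_of_mem hxK] using hy j
  have hδ : Tendsto (fun j => c * dist (y j) x) atTop (𝓝[>] 0) := by
    refine tendsto_nhdsWithin_iff.mpr ⟨?_, .of_forall fun j => mul_pos hc (dist_pos.mpr (hne j))⟩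
    simpa using (tendsto_iff_dist_tendsto_zero.mp hyx).const_mul c
  obtain ⟨m, hm⟩ := exists_nat_ge (1 / c)
  have hball : ∀ j, x ∈ closedBall (y j) (m * (c * dist (y j) x)) := fun j => by
    rw [mem_closedBall, dist_comm, ← mul_assoc]
    exact le_mul_of_one_le_left dist_nonneg ((div_le_iff₀ hc).mp hm)
  have hempty : ∀ j, K ∩ closedBall (y j) (c * dist (y j) x) = ∅ := fun j =>
    (disjoint_closedBall_of_lt_infDist (hy j)).symm.inter_eq
  have hlim := hx m hxK y _ hδ (.of_forall hball)
  simp only [hempty, measure_empty, ENNReal.zero_div] at hlim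
  exact zero_ne_one (tendsto_nhds_unique tendsto_const_nhds hlim)

variable {E : Type*} [NormedAddCommGroup E] [NormedSpace ℝ E] [FiniteDimensional ℝ E]

lemma exists_differentiableWithinAt_and_isLittleO_infDist
    {F : Type*} [NormedAddCommGroup F] [NormedSpace ℝ F] [FiniteDimensional ℝ F]
    [MeasurableSpace E] [BorelSpace E] {μ : Measure E} [μ.IsAddHaarMeasure] {C : ℝ≥0}
    {ℓ : E → F} {K : Set E} (hℓ : LipschitzOnWith C ℓ K) (hK : μ K ≠ 0) :
    ∃ x ∈ K, DifferentiableWithinAt ℝ ℓ K x ∧ (fun y => infDist y K) =o[𝓝 x] fun y => y - x := by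
  have hae := (hℓ.ae_differentiableWithinAt_of_mem (μ := μ)).and (ae_isLittleO_infDist μ K)
  obtain ⟨x, hx, hdiff, hdens⟩ := ((frequently_ae_mem_iff.mpr hK).and_eventually hae).exists
  refine ⟨x, hx, hdiff hx, ?_⟩
  simpa only [dist_eq_norm, isLittleO_norm_right] using hdens hx

lemma hausdorffMeasure_ne_zero_of_interior_image_nonempty {X : Type*} [EMetricSpace X]
    [MeasurableSpace X] [BorelSpace X] {C : ℝ≥0} {P : X → E} {K : Set X}
    (hP : LipschitzOnWith C P K) (hint : (interior (P '' K)).Nonempty) :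
    μH[Module.finrank ℝ E] K ≠ 0 := by
  borelize E
  intro hK
  refine (Measure.measure_pos_of_nonempty_interior μH[Module.finrank ℝ E] hint).ne' ?_
  simpa [hK] using hP.hausdorffMeasure_image_le (d := Module.finrank ℝ E) (by positivity)

end Density

section Superjet

variable {E : Type*} [NormedAddCommGroup E] [NormedSpace ℝ E]

/-- `(L, A)` belongs to the second-order superjet of `u` at `a` relative to `D`, the function `u`
being compared with a quadratic polynomial at the points of `D` only. -/
def InSuperjetWithin (D : Set E) (u : E → ℝ) (a : E) (L : E →L[ℝ] ℝ) (A : E →L[ℝ] E →L[ℝ] ℝ) :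
    Prop :=
  ∀ κ > 0, ∀ᶠ y in 𝓝[D] a,
    u y ≤ u a + L (y - a) + (1 / 2) * A (y - a) (y - a) + κ * ‖y - a‖ ^ 2

variable {U W : E → ℝ} {L M : E →L[ℝ] ℝ} {A : E →L[ℝ] E →L[ℝ] ℝ} {x : E}

lemma HasQuadraticExpansionAt.inSuperjetWithin_univ (hU : HasQuadraticExpansionAt U L A x) :
    InSuperjetWithin univ U x L A := fun κ hκ => by
  rw [nhdsWithin_univ]
  filter_upwards [hU.def hκ] with y hy
  rw [norm_pow, norm_norm, Real.norm_eq_abs, quadraticRemainder] at hy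
  linarith [(abs_le.mp hy).2]

lemma HasQuadraticExpansionAt.inSuperjetWithin_univ_of_add_le
    (hU : HasQuadraticExpansionAt U L A x) (hmax : ∀ y, U y + W y + M y ≤ U x + W x + M x) :
    InSuperjetWithin univ W x (-L - M) (-A) := fun κ hκ => by
  rw [nhdsWithin_univ]
  filter_upwards [hU.def hκ] with y hy
  rw [norm_pow, norm_norm, Real.norm_eq_abs, quadraticRemainder] at hy
  simp only [sub_apply, neg_apply, map_sub M]
  linarith [(abs_le.mp hy).1, hmax y]

end Superjet

section Proximal

variable {E : Type*} [NormedAddCommGroup E] [NormedSpace ℝ E]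

/-- The bilinear form `B` is symmetric and positive definite. -/
structure IsPosDefForm (B : E →L[ℝ] E →L[ℝ] ℝ) : Prop where
  symm : ∀ x y, B x y = B y x
  pos : ∀ x, x ≠ 0 → 0 < B x x

/-- `Y x` is, for every `x`, a point of `D` at which the supremum defining the sup-convolution
`sup_{z ∈ D} (u z - B (x - z) (x - z))` of `u` is attained. -/
def IsProximalSelection (B : E →L[ℝ] E →L[ℝ] ℝ) (D : Set E) (u : E → ℝ) (Y : E → E) : Prop :=
  ∀ x, Y x ∈ D ∧ IsMaxOn (fun z => u z - B (x - z) (x - z)) D (Y x)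

/-- The sup-convolution of `u`, computed through a proximal selection `Y` of `u`. -/
noncomputable def proximalEnvelope (B : E →L[ℝ] E →L[ℝ] ℝ) (u : E → ℝ) (Y : E → E) (x : E) : ℝ :=
  u (Y x) - B (x - Y x) (x - Y x)

/-- The slope at `x` of the paraboloid `y ↦ u (Y x) - B (y - Y x) (y - Y x)`, which touches the
sup-convolution of `u` from below at `x`. -/
noncomputable def proximalSlope (B : E →L[ℝ] E →L[ℝ] ℝ) (Y : E → E) (x : E) : E →L[ℝ] ℝ :=
  B ((2 : ℝ) • (Y x - x))

variable {B : E →L[ℝ] E →L[ℝ] ℝ} {D : Set E} {u : E → ℝ} {Y : E → E}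

lemma IsPosDefForm.nonneg (hB : IsPosDefForm B) (x : E) : 0 ≤ B x x := by
  rcases eq_or_ne x 0 with rfl | hx
  · simp
  · exact (hB.pos x hx).le

lemma IsPosDefForm.eq_zero_of_apply_self_nonpos (hB : IsPosDefForm B) {x : E} (hx : B x x ≤ 0) :
    x = 0 :=
  by_contra fun h => hx.not_gt (hB.pos x h)

lemma exists_isProximalSelection (B : E →L[ℝ] E →L[ℝ] ℝ) (hD : IsCompact D) (hne : D.Nonempty)
    (hu : UpperSemicontinuousOn u D) : ∃ Y, IsProximalSelection B D u Y := by
  have hmax : ∀ x, ∃ y ∈ D, IsMaxOn (fun z => u z - B (x - z) (x - z)) D y := fun x => by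
    simp only [sub_eq_add_neg (u _)]
    refine UpperSemicontinuousOn.exists_isMaxOn hne hD (hu.add ?_)
    exact (Continuous.upperSemicontinuous (by fun_prop)).upperSemicontinuousOn D
  choose Y hY using hmax
  exact ⟨Y, hY⟩

lemma IsProximalSelection.le_proximalEnvelope (hY : IsProximalSelection B D u Y) {z : E}
    (hz : z ∈ D) (x : E) : u z - B (x - z) (x - z) ≤ proximalEnvelope B u Y x :=
  (hY x).2 hz

lemma IsProximalSelection.proximalEnvelope_add_slope_le (hY : IsProximalSelection B D u Y)
    (hB : IsPosDefForm B) (x y : E) :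
    proximalEnvelope B u Y x + proximalSlope B Y x (y - x) - ‖B‖ * ‖y - x‖ ^ 2 ≤
      proximalEnvelope B u Y y := by
  have hcompare := hY.le_proximalEnvelope (hY x).1 y
  have hexpand : B (y - Y x) (y - Y x) =
      B (x - Y x) (x - Y x) - proximalSlope B Y x (y - x) + B (y - x) (y - x) := by
    rw [show y - Y x = (x - Y x) + (y - x) by abel, proximalSlope,
      show (2 : ℝ) • (Y x - x) = (-2 : ℝ) • (x - Y x) by module]
    simp only [map_add, add_apply, map_smul, smul_apply, smul_eq_mul, hB.symm (y - x) (x - Y x)]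
    ring
  have hbound : B (y - x) (y - x) ≤ ‖B‖ * ‖y - x‖ * ‖y - x‖ :=
    (le_abs_self _).trans (B.le_opNorm₂ _ _)
  simp only [proximalEnvelope] at hcompare ⊢
  linarith

lemma IsProximalSelection.inSuperjetWithin (hY : IsProximalSelection B D u Y) {x : E}
    {L : E →L[ℝ] ℝ} {A : E →L[ℝ] E →L[ℝ] ℝ}
    (hx : InSuperjetWithin univ (proximalEnvelope B u Y) x L A) :
    InSuperjetWithin D u (Y x) L A := fun κ hκ => by
  have hshift : Tendsto (fun y => x + (y - Y x)) (𝓝[D] (Y x)) (𝓝 x) := by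
    have hcont : Continuous fun y => x + (y - Y x) := by fun_prop
    simpa [ContinuousWithinAt] using hcont.continuousWithinAt (s := D) (x := Y x)
  filter_upwards [hshift.eventually (nhdsWithin_univ x ▸ hx κ hκ), self_mem_nhdsWithin]
    with y hy hyD
  have hcompare := hY.le_proximalEnvelope hyD (x + (y - Y x))
  rw [show x + (y - Y x) - y = x - Y x by abel] at hcompare
  rw [add_sub_cancel_left] at hy
  simp only [proximalEnvelope] at hy hcompare
  linarith

/-- `B` is injective, so that `Y x` can be recovered from the slope at `x`. -/
lemma IsPosDefForm.exists_lipschitzOnWith_of_proximalSlope [FiniteDimensional ℝ E]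
    (hB : IsPosDefForm B) {C : ℝ≥0} {K : Set E} (hK : LipschitzOnWith C (proximalSlope B Y) K) :
    ∃ C', LipschitzOnWith C' Y K := by
  obtain ⟨c, -, hc⟩ := B.toLinearMap.exists_antilipschitzWith <| LinearMap.ker_eq_bot'.mpr
    fun x hx => hB.eq_zero_of_apply_self_nonpos (by
      simpa using (congrArg (fun L : E →L[ℝ] ℝ => L x) hx).le)
  have hlip : LipschitzOnWith (c * C) (fun x => (2 : ℝ) • (Y x - x)) K :=
    .of_dist_le_mul fun x hx y hy => by
      rw [NNReal.coe_mul, mul_assoc]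
      exact (hc.le_mul_dist _ _).trans (by gcongr; exact hK.dist_le_mul x hx y hy)
  have hY : Y = fun x => (1 / 2 : ℝ) • ((2 : ℝ) • (Y x - x)) + x := by
    funext x; module
  rw [hY]
  exact ⟨_, ((lipschitzWith_smul (1 / 2 : ℝ)).comp_lipschitzOnWith hlip).add
    LipschitzWith.id.lipschitzOnWith⟩

lemma hasQuadraticContactOn_of_add_le {U W : E → ℝ} {ℓ m : E → E →L[ℝ] ℝ} {C : ℝ≥0} {K : Set E}
    (hU : ∀ x y, U x + ℓ x (y - x) - C * ‖y - x‖ ^ 2 ≤ U y)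
    (hW : ∀ x y, W x + m x (y - x) - C * ‖y - x‖ ^ 2 ≤ W y)
    (hmax : ∀ x ∈ K, ∀ y, U y + W y - (ℓ x + m x) y ≤ U x + W x - (ℓ x + m x) x) :
    HasQuadraticContactOn U ℓ C K := fun x hx y => by
  have hle := hmax x hx y
  have hWy := hW x y
  rw [add_apply, add_apply] at hle
  rw [map_sub] at hWy
  rw [map_sub, abs_le]
  have hUy := hU x y
  rw [map_sub] at hUy
  constructor <;> linarith

end Proximal

section Ishii

variable {E : Type*} [NormedAddCommGroup E] [NormedSpace ℝ E] {B : E →L[ℝ] E →L[ℝ] ℝ}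
  {D : Set E} {u w : E → ℝ} {Y Z : E → E}

/-- The functional maximised over `D × D` in the doubling of variables: `B` penalises the distance
of the two points and `e` is a small linear perturbation. -/
noncomputable def doubledFunctional (B : E →L[ℝ] E →L[ℝ] ℝ) (u w : E → ℝ) (e : E)
    (p : E × E) : ℝ :=
  u p.1 + w p.2 - (1 / 2) * B (p.1 - p.2) (p.1 - p.2) + B e (p.1 + p.2)

/-- The points `x` at which the sum of the two sup-convolutions, perturbed by the linear function
`2 B e`, is maximal; `e` has to be `2 x - Y x - Z x` for the slopes to add up to zero. -/
def perturbedMaxima (B : E →L[ℝ] E →L[ℝ] ℝ) (u w : E → ℝ) (Y Z : E → E) : Set E :=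
  {x | ∀ y, proximalEnvelope B u Y y + proximalEnvelope B w Z y
      + 2 * B ((2 : ℝ) • x - Y x - Z x) y ≤
    proximalEnvelope B u Y x + proximalEnvelope B w Z x + 2 * B ((2 : ℝ) • x - Y x - Z x) x}

/-- Completing the square in `x`. -/
lemma IsPosDefForm.sub_add_eq_doubledFunctional (hB : IsPosDefForm B) (u w : E → ℝ)
    (e x a b : E) :
    (u a - B (x - a) (x - a)) + (w b - B (x - b) (x - b)) + 2 * B e x =
      doubledFunctional B u w e (a, b) + (1 / 2) * B e e
        - (1 / 2) * B ((2 : ℝ) • x - a - b - e) ((2 : ℝ) • x - a - b - e) := by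
  simp only [doubledFunctional, map_sub, map_add, map_smul, sub_apply, smul_apply, smul_eq_mul,
    hB.symm a x, hB.symm b x, hB.symm b a, hB.symm x e, hB.symm a e, hB.symm b e]
  ring

lemma exists_isMaxOn_doubledFunctional (B : E →L[ℝ] E →L[ℝ] ℝ) (hD : IsCompact D)
    (hne : D.Nonempty) (hu : UpperSemicontinuousOn u D) (hw : UpperSemicontinuousOn w D) (e : E) :
    ∃ p ∈ D ×ˢ D, IsMaxOn (doubledFunctional B u w e) (D ×ˢ D) p := by
  refine UpperSemicontinuousOn.exists_isMaxOn (hne.prod hne) (hD.prod hD) ?_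
  have hsplit : doubledFunctional B u w e = fun p : E × E =>
      (u p.1 + w p.2) + (-((1 / 2) * B (p.1 - p.2) (p.1 - p.2)) + B e (p.1 + p.2)) := by
    funext p; simp only [doubledFunctional]; ring
  rw [hsplit]
  refine .add ((hu.comp continuousOn_fst fun p hp => hp.1).add
    (hw.comp continuousOn_snd fun p hp => hp.2)) ?_
  exact (Continuous.upperSemicontinuous (by fun_prop)).upperSemicontinuousOn _

lemma exists_mem_perturbedMaxima (hB : IsPosDefForm B) (hD : IsCompact D) (hne : D.Nonempty)
    (hu : UpperSemicontinuousOn u D) (hw : UpperSemicontinuousOn w D)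
    (hY : IsProximalSelection B D u Y) (hZ : IsProximalSelection B D w Z) (e : E) :
    ∃ x ∈ perturbedMaxima B u w Y Z, (2 : ℝ) • x - Y x - Z x = e := by
  obtain ⟨⟨a, b⟩, ⟨ha, hb⟩, hmax⟩ := exists_isMaxOn_doubledFunctional B hD hne hu hw e
  set x : E := (1 / 2 : ℝ) • (a + b + e) with hx
  have hxab : (2 : ℝ) • x - a - b - e = 0 := by rw [hx]; module
  have hab_le : doubledFunctional B u w e (a, b) + (1 / 2) * B e e ≤
      proximalEnvelope B u Y x + proximalEnvelope B w Z x + 2 * B e x := by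
    have hident := hB.sub_add_eq_doubledFunctional u w e x a b
    rw [hxab, map_zero, mul_zero, sub_zero] at hident
    linarith [hY.le_proximalEnvelope ha x, hZ.le_proximalEnvelope hb x]
  have hle_ab : ∀ y, proximalEnvelope B u Y y + proximalEnvelope B w Z y + 2 * B e y
      + (1 / 2) * B ((2 : ℝ) • y - Y y - Z y - e) ((2 : ℝ) • y - Y y - Z y - e) ≤
        doubledFunctional B u w e (a, b) + (1 / 2) * B e e := fun y => by
    have hident := hB.sub_add_eq_doubledFunctional u w e y (Y y) (Z y)
    have hle : doubledFunctional B u w e (Y y, Z y) ≤ doubledFunctional B u w e (a, b) :=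
      hmax ⟨(hY y).1, (hZ y).1⟩
    simp only [proximalEnvelope]
    linarith
  have hxe : (2 : ℝ) • x - Y x - Z x = e :=
    sub_eq_zero.mp (hB.eq_zero_of_apply_self_nonpos (by linarith [hle_ab x]))
  refine ⟨x, fun y => ?_, hxe⟩
  rw [hxe]
  linarith [hle_ab y, hB.nonneg ((2 : ℝ) • y - Y y - Z y - e)]

lemma isMaxOn_doubledFunctional_of_mem_perturbedMaxima (hB : IsPosDefForm B)
    (hY : IsProximalSelection B D u Y) (hZ : IsProximalSelection B D w Z) {x : E}
    (hx : x ∈ perturbedMaxima B u w Y Z) :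
    IsMaxOn (doubledFunctional B u w ((2 : ℝ) • x - Y x - Z x)) (D ×ˢ D) (Y x, Z x) := by
  rintro ⟨p, q⟩ ⟨hp, hq⟩
  set e := (2 : ℝ) • x - Y x - Z x with he
  set y : E := (1 / 2 : ℝ) • (p + q + e) with hy
  have hpq := hB.sub_add_eq_doubledFunctional u w e y p q
  have hYZ := hB.sub_add_eq_doubledFunctional u w e x (Y x) (Z x)
  rw [show (2 : ℝ) • y - p - q - e = 0 by rw [hy]; module, map_zero, mul_zero, sub_zero] at hpq
  rw [← he, sub_self, map_zero, mul_zero, sub_zero] at hYZ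
  have hmax := hx y
  rw [← he] at hmax
  have hp_le := hY.le_proximalEnvelope hp y
  have hq_le := hZ.le_proximalEnvelope hq y
  simp only [proximalEnvelope] at hmax hp_le hq_le
  change doubledFunctional B u w e (p, q) ≤ doubledFunctional B u w e (Y x, Z x)
  linarith

lemma proximalSlope_add_proximalSlope (B : E →L[ℝ] E →L[ℝ] ℝ) (Y Z : E → E) (x : E) :
    proximalSlope B Y x + proximalSlope B Z x = -(2 : ℝ) • B ((2 : ℝ) • x - Y x - Z x) := by
  rw [proximalSlope, proximalSlope, ← map_add, ← map_smul]
  congr 1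
  module

lemma hasQuadraticContactOn_perturbedMaxima (hB : IsPosDefForm B)
    (hY : IsProximalSelection B D u Y) (hZ : IsProximalSelection B D w Z) :
    HasQuadraticContactOn (proximalEnvelope B u Y) (proximalSlope B Y) ‖B‖₊
      (perturbedMaxima B u w Y Z) := by
  refine hasQuadraticContactOn_of_add_le (hY.proximalEnvelope_add_slope_le hB)
    (hZ.proximalEnvelope_add_slope_le hB) fun x hx y => ?_
  rw [proximalSlope_add_proximalSlope]
  simp only [smul_apply, smul_eq_mul]
  linarith [hx y]

lemma perturbedMaxima_comm (B : E →L[ℝ] E →L[ℝ] ℝ) (u w : E → ℝ) (Y Z : E → E) :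
    perturbedMaxima B w u Z Y = perturbedMaxima B u w Y Z := by
  simp only [perturbedMaxima, sub_right_comm _ (Z _) (Y _),
    add_comm (proximalEnvelope B w Z _) (proximalEnvelope B u Y _)]

variable [FiniteDimensional ℝ E]

lemma exists_lipschitzOnWith_perturbedMaxima (hB : IsPosDefForm B)
    (hY : IsProximalSelection B D u Y) (hZ : IsProximalSelection B D w Z) :
    ∃ C, LipschitzOnWith C Y (perturbedMaxima B u w Y Z) :=
  hB.exists_lipschitzOnWith_of_proximalSlope
    (hasQuadraticContactOn_perturbedMaxima hB hY hZ).lipschitzOnWith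

lemma hausdorffMeasure_perturbedMaxima_ne_zero [MeasurableSpace E] [BorelSpace E]
    (hB : IsPosDefForm B) (hD : IsCompact D) (hne : D.Nonempty)
    (hu : UpperSemicontinuousOn u D) (hw : UpperSemicontinuousOn w D)
    (hY : IsProximalSelection B D u Y) (hZ : IsProximalSelection B D w Z) {r : ℝ} (hr : 0 < r) :
    μH[Module.finrank ℝ E]
      (perturbedMaxima B u w Y Z ∩ {x | ‖(2 : ℝ) • x - Y x - Z x‖ < r}) ≠ 0 := by
  obtain ⟨CY, hCY⟩ := exists_lipschitzOnWith_perturbedMaxima hB hY hZ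
  obtain ⟨CZ, hCZ⟩ := exists_lipschitzOnWith_perturbedMaxima hB hZ hY
  rw [perturbedMaxima_comm] at hCZ
  have hlip := (((lipschitzWith_smul (2 : ℝ)).lipschitzOnWith
    (s := perturbedMaxima B u w Y Z)).sub hCY).sub hCZ
  refine hausdorffMeasure_ne_zero_of_interior_image_nonempty (hlip.mono inter_subset_left)
    ⟨0, mem_interior_iff_mem_nhds.mpr (mem_of_superset (ball_mem_nhds 0 hr) fun e he => ?_)⟩
  obtain ⟨x, hx, rfl⟩ := exists_mem_perturbedMaxima hB hD hne hu hw hY hZ e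
  exact ⟨x, ⟨hx, mem_ball_zero_iff.mp he⟩, rfl⟩

/-- Ishii's lemma, for the sum of two functions and up to an arbitrarily small perturbation `e`. -/
theorem exists_inSuperjetWithin_of_isMaxOn_doubledFunctional
    (hB : IsPosDefForm B) (hD : IsCompact D) (hne : D.Nonempty)
    (hu : UpperSemicontinuousOn u D) (hw : UpperSemicontinuousOn w D) {r : ℝ} (hr : 0 < r) :
    ∃ e : E, ‖e‖ < r ∧ ∃ a ∈ D, ∃ b ∈ D, ∃ A : E →L[ℝ] E →L[ℝ] ℝ,
      IsMaxOn (doubledFunctional B u w e) (D ×ˢ D) (a, b) ∧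
      InSuperjetWithin D u a (B (a - b - e)) A ∧ InSuperjetWithin D w b (B (b - a - e)) (-A) := by
  borelize E
  obtain ⟨Y, hY⟩ := exists_isProximalSelection B hD hne hu
  obtain ⟨Z, hZ⟩ := exists_isProximalSelection B hD hne hw
  have hcontact := hasQuadraticContactOn_perturbedMaxima hB hY hZ
  set S := perturbedMaxima B u w Y Z
  set K := S ∩ {x | ‖(2 : ℝ) • x - Y x - Z x‖ < r}
  have hKcontact : HasQuadraticContactOn _ _ _ K := fun x hx => hcontact x hx.1
  obtain ⟨x, hxK, hdiff, hdense⟩ := exists_differentiableWithinAt_and_isLittleO_infDist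
    hKcontact.lipschitzOnWith
    (hausdorffMeasure_perturbedMaxima_ne_zero hB hD hne hu hw hY hZ hr)
  have hexp := hKcontact.hasQuadraticExpansionAt hxK hdiff.hasFDerivWithinAt hdense
  set e := (2 : ℝ) • x - Y x - Z x with he
  have hslopeY : proximalSlope B Y x = B (Y x - Z x - e) := by
    rw [proximalSlope, he]; congr 1; module
  have hslopeZ : -proximalSlope B Y x - (2 : ℝ) • B e = B (Z x - Y x - e) := by
    rw [proximalSlope, he, ← map_neg, ← map_smul, ← map_sub]; congr 1; module
  refine ⟨e, hxK.2, Y x, (hY x).1, Z x, (hZ x).1, fderivWithin ℝ (proximalSlope B Y) K x,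
    isMaxOn_doubledFunctional_of_mem_perturbedMaxima hB hY hZ hxK.1, ?_, ?_⟩
  · rw [← hslopeY]
    exact hY.inSuperjetWithin hexp.inSuperjetWithin_univ
  · rw [← hslopeZ]
    exact hZ.inSuperjetWithin (hexp.inSuperjetWithin_univ_of_add_le hxK.1)

end Ishii

section Doubling

lemma isCompact_setOf_le_add {X : Type*} [TopologicalSpace X] {D : Set X} {u w : X → ℝ}
    (hD : IsCompact D) (hu : UpperSemicontinuousOn u D) (hw : UpperSemicontinuousOn w D) (m : ℝ) :
    IsCompact ((D ×ˢ D) ∩ (fun p : X × X => u p.1 + w p.2) ⁻¹' Ici m) := by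
  have hsum : UpperSemicontinuousOn (fun p : X × X => u p.1 + w p.2) (D ×ˢ D) :=
    (hu.comp continuousOn_fst fun _ h => h.1).add (hw.comp continuousOn_snd fun _ h => h.2)
  exact hsum.isCompact_inter_preimage_Ici (hD.prod hD) m

variable {E : Type*} [NormedAddCommGroup E] [NormedSpace ℝ E]

lemma exists_pos_forall_dist_le_mem_prod {X : Type*} [MetricSpace X] {Q : Set (X × X)}
    (hQ : IsCompact Q) {I : Set X} (hI : IsOpen I) (hdiag : ∀ x, (x, x) ∈ Q → x ∈ I) :
    ∃ ρ > 0, ∀ p ∈ Q, dist p.1 p.2 ≤ ρ → p ∈ I ×ˢ I := by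
  have hpos : ∀ p ∈ Q \ I ×ˢ I, 0 < dist p.1 p.2 := fun ⟨x, y⟩ hp => dist_pos.mpr fun h => by
    obtain rfl : x = y := h
    exact hp.2 ⟨hdiag x hp.1, hdiag x hp.1⟩
  obtain ⟨ρ, hρ, hle⟩ := (hQ.diff (hI.prod hI)).exists_forall_le' continuous_dist.continuousOn hpos
  refine ⟨ρ / 2, half_pos hρ, fun p hp hdist => by_contra fun hpI => ?_⟩
  linarith [hle p ⟨hp, hpI⟩]

lemma eventually_forall_mem_abs_apply_lt (B : E →L[ℝ] E →L[ℝ] ℝ) {S : Set E}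
    (hS : Bornology.IsBounded S) {κ : ℝ} (hκ : 0 < κ) :
    ∀ᶠ e in 𝓝 (0 : E), ∀ x ∈ S, |B e x| < κ := by
  obtain ⟨M, -, hle⟩ := hS.exists_pos_norm_le
  have hlim : Tendsto (fun e => ‖B e‖ * M) (𝓝 0) (𝓝 0) := by
    have : Continuous fun e => ‖B e‖ * M := by fun_prop
    simpa using this.tendsto 0
  filter_upwards [hlim.eventually_lt_const hκ] with e he x hx
  calc |B e x| ≤ ‖B e‖ * ‖x‖ := (B e).le_opNorm x
    _ ≤ ‖B e‖ * M := by gcongr; exact hle x hx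
    _ < κ := he

lemma InSuperjetWithin.univ_of_mem_nhds {D : Set E} {u : E → ℝ} {a : E} {L : E →L[ℝ] ℝ}
    {A : E →L[ℝ] E →L[ℝ] ℝ} (h : InSuperjetWithin D u a L A) (hD : D ∈ 𝓝 a) :
    InSuperjetWithin univ u a L A := fun κ hκ => by
  simpa only [nhdsWithin_univ, nhdsWithin_eq_nhds.mpr hD] using h κ hκ

variable {B : E →L[ℝ] E →L[ℝ] ℝ} {D I : Set E} {u w : E → ℝ} {m : ℝ}

lemma eventually_add_half_le_of_isMaxOn_doubledFunctional (B : E →L[ℝ] E →L[ℝ] ℝ)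
    (hD : Bornology.IsBounded D) {p₀ : E} (hp₀ : p₀ ∈ D) (hm : m < u p₀ + w p₀) :
    ∀ᶠ e in 𝓝 (0 : E), ∀ a ∈ D, ∀ b ∈ D, IsMaxOn (doubledFunctional B u w e) (D ×ˢ D) (a, b) →
      m + (1 / 2) * B (a - b) (a - b) ≤ u a + w b := by
  have hbdd : Bornology.IsBounded ((D + D) - {p₀ + p₀}) :=
    (hD.add hD).sub Bornology.isBounded_singleton
  filter_upwards [eventually_forall_mem_abs_apply_lt B hbdd (sub_pos.mpr hm)]
    with e he a ha b hb hmax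
  have hle : doubledFunctional B u w e (p₀, p₀) ≤ doubledFunctional B u w e (a, b) :=
    hmax (mk_mem_prod hp₀ hp₀)
  have hsmall := he _ (sub_mem_sub (add_mem_add ha hb) (mem_singleton _))
  simp only [doubledFunctional, sub_self, map_zero, mul_zero, sub_zero] at hle
  rw [map_sub] at hsmall
  linarith [(abs_lt.mp hsmall).2]

theorem exists_isCompact_forall_exists_superjets [FiniteDimensional ℝ E] (hD : IsCompact D)
    (hI : IsOpen I) (hID : I ⊆ D) (hu : UpperSemicontinuousOn u D) (hw : UpperSemicontinuousOn w D)
    {p₀ : E} (hp₀ : p₀ ∈ D) (hm : m < u p₀ + w p₀) (hmI : ∀ p ∈ D, m ≤ u p + w p → p ∈ I) :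
    ∃ P ⊆ I ×ˢ I, IsCompact P ∧ ∃ R : ℝ, ∃ ρ > 0, ∀ B : E →L[ℝ] E →L[ℝ] ℝ, IsPosDefForm B →
      (∀ h, B h h ≤ R → ‖h‖ ≤ ρ) → ∀ r > 0, ∃ e : E, ‖e‖ < r ∧ ∃ a b : E, (a, b) ∈ P ∧
        B (a - b) (a - b) ≤ R ∧ |w b| ≤ R ∧ m ≤ u a + w b ∧ ∃ A : E →L[ℝ] E →L[ℝ] ℝ,
          InSuperjetWithin univ u a (B (a - b - e)) A ∧
          InSuperjetWithin univ w b (B (b - a - e)) (-A) := by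
  obtain ⟨Mu, hMu⟩ := hu.bddAbove_of_isCompact hD
  obtain ⟨Mw, hMw⟩ := hw.bddAbove_of_isCompact hD
  replace hMu : ∀ p ∈ D, u p ≤ Mu := fun p hp => hMu (mem_image_of_mem u hp)
  replace hMw : ∀ p ∈ D, w p ≤ Mw := fun p hp => hMw (mem_image_of_mem w hp)
  have hQ := isCompact_setOf_le_add hD hu hw m
  obtain ⟨ρ, hρ, hnear⟩ := exists_pos_forall_dist_le_mem_prod hQ hI fun p hp => hmI p hp.1.1 hp.2
  set R := max (2 * (Mu + Mw - m)) (max Mw (Mu - m))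
  refine ⟨_ ∩ {p | dist p.1 p.2 ≤ ρ}, fun p hp => hnear p hp.1 hp.2,
    hQ.inter_right (isClosed_le continuous_dist continuous_const), R, ρ, hρ,
    fun B hB hBρ r hr => ?_⟩
  obtain ⟨r', hr', hball⟩ := Metric.eventually_nhds_iff.mp
    (eventually_add_half_le_of_isMaxOn_doubledFunctional B hD.isBounded hp₀ hm)
  obtain ⟨e, he, a, ha, b, hb, A, hmax, hua, hwb⟩ :=
    exists_inSuperjetWithin_of_isMaxOn_doubledFunctional hB hD ⟨p₀, hp₀⟩ hu hw (lt_min hr hr')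
  have hval := hball (by rw [dist_zero_right]; exact he.trans_le (min_le_right _ _)) a ha b hb hmax
  have hBR : B (a - b) (a - b) ≤ R := by
    linarith [le_max_left (2 * (Mu + Mw - m)) (max Mw (Mu - m)), hMu a ha, hMw b hb]
  have hle : m ≤ u a + w b := by linarith [hB.nonneg (a - b)]
  have hdist : dist a b ≤ ρ := by rw [dist_eq_norm]; exact hBρ _ hBR
  have hab : (a, b) ∈ I ×ˢ I := hnear (a, b) ⟨⟨ha, hb⟩, hle⟩ hdist
  have hwR : |w b| ≤ R := abs_le'.mpr
    ⟨le_max_of_le_right (le_max_of_le_left (hMw b hb)),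
      le_max_of_le_right (le_max_of_le_right (by linarith [hMu a ha]))⟩
  exact ⟨e, he.trans_le (min_le_left _ _), a, b, ⟨⟨⟨ha, hb⟩, hle⟩, hdist⟩, hBR, hwR, hle, A,
    hua.univ_of_mem_nhds (mem_of_superset (hI.mem_nhds hab.1) hID),
    hwb.univ_of_mem_nhds (mem_of_superset (hI.mem_nhds hab.2) hID)⟩

end Doubling

section HessianOperator

section ConcaveOnCone

variable {V : Type*} [AddCommGroup V] [Module ℝ V] {C : ConvexCone ℝ V} {f : V → ℝ} {x y : V}

lemma one_sub_mul_add_mul_le_apply_add_smul (hf : ConcaveOn ℝ C f) (hx : x ∈ C) (hy : y ∈ C)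
    {δ : ℝ} (hδ : 0 < δ) (hδ₁ : δ < 1) :
    (1 - δ) * f x + δ * f (x + y) ≤ f (x + δ • y) := by
  have h := hf.2 hx (C.add_mem hx hy) (sub_nonneg.mpr hδ₁.le) hδ.le (sub_add_cancel 1 δ)
  have hpt : (1 - δ) • x + δ • (x + y) = x + δ • y := by module
  rwa [hpt] at h

lemma apply_le_apply_add_of_concaveOn_of_nonneg (hf : ConcaveOn ℝ C f) (hnonneg : ∀ z ∈ C, 0 ≤ f z)
    (hx : x ∈ C) (hy : y ∈ C) : f x ≤ f (x + y) := by
  have hle : ∀ δ ∈ Ioo (0 : ℝ) 1, (1 - δ) * f x ≤ f (x + y) := fun δ hδ => by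
    have hy' : δ⁻¹ • y ∈ C := C.smul_mem (inv_pos.mpr hδ.1) hy
    have h := one_sub_mul_add_mul_le_apply_add_smul hf hx hy' hδ.1 hδ.2
    rw [smul_inv_smul₀ hδ.1.ne'] at h
    linarith [mul_nonneg hδ.1.le (hnonneg _ (C.add_mem hx hy'))]
  have hlim : Tendsto (fun δ : ℝ => (1 - δ) * f x) (𝓝[>] 0) (𝓝 (f x)) := by
    have hcont : Continuous fun δ : ℝ => (1 - δ) * f x := by fun_prop
    simpa using (hcont.tendsto 0).mono_left nhdsWithin_le_nhds
  exact le_of_tendsto hlim (mem_of_superset (Ioo_mem_nhdsGT one_pos) hle)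

lemma one_sub_mul_add_mul_le_of_concaveOn_of_nonneg (hf : ConcaveOn ℝ C f)
    (hnonneg : ∀ z ∈ C, 0 ≤ f z) (hx : x ∈ C) (hy : y ∈ C) {δ : ℝ} (hδ : 0 < δ) (hδ₁ : δ < 1) :
    (1 - δ) * f x + δ * f y ≤ f (x + δ • y) := by
  have hmono : f y ≤ f (x + y) := by
    rw [add_comm x]
    exact apply_le_apply_add_of_concaveOn_of_nonneg hf hnonneg hy hx
  linarith [mul_le_mul_of_nonneg_left hmono hδ.le,
    one_sub_mul_add_mul_le_apply_add_smul hf hx hy hδ hδ₁]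

end ConcaveOnCone

section Eigenvalues

lemma isHermitian_add_ofReal_smul_one {ι 𝕜 : Type*} [DecidableEq ι] [RCLike 𝕜]
    {H : Matrix ι ι 𝕜} (hH : H.IsHermitian) (c : ℝ) :
    (H + (c : 𝕜) • (1 : Matrix ι ι 𝕜)).IsHermitian :=
  hH.add (Matrix.isHermitian_one.smul (RCLike.conj_ofReal c))

variable {ι : Type*} [Fintype ι] [DecidableEq ι]

lemma roots_charpoly_add_smul_one {R : Type*} [CommRing R] [IsDomain R] (M : Matrix ι ι R) (c : R) :
    (M + c • (1 : Matrix ι ι R)).charpoly.roots = M.charpoly.roots.map (· + c) := by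
  have hshift : M + c • (1 : Matrix ι ι R) = M - Matrix.scalar ι (-c) := by
    rw [map_neg, sub_neg_eq_add, Matrix.scalar_apply, Matrix.smul_one_eq_diagonal]
  rw [hshift, Matrix.charpoly_sub_scalar]
  simpa using Polynomial.roots_comp_C_mul_X_add_C M.charpoly 1 (-c) isUnit_one

lemma eigenvalues_add_smul_one {𝕜 : Type*} [RCLike 𝕜] {H : Matrix ι ι 𝕜} (hH : H.IsHermitian)
    (c : ℝ) (hHc : (H + (c : 𝕜) • (1 : Matrix ι ι 𝕜)).IsHermitian) :
    hHc.eigenvalues = fun i => hH.eigenvalues i + c := by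
  have hroots : ((H + (c : 𝕜) • (1 : Matrix ι ι 𝕜)).charpoly.roots.map RCLike.re).sort (· ≥ ·) =
      List.ofFn fun i => hH.eigenvalues₀ i + c := by
    rw [roots_charpoly_add_smul_one, hH.roots_charpoly_eq_eigenvalues₀, Multiset.map_map,
      Multiset.map_map, Fin.univ_val_map, Multiset.coe_sort]
    simp only [Function.comp_def, map_add, RCLike.ofReal_re]
    refine List.mergeSort_of_pairwise ?_
    simp_rw [decide_eq_true_eq, ← List.sortedGE_iff_pairwise]
    exact (hH.eigenvalues₀_antitone.add_const c).sortedGE_ofFn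
  rw [hHc.sort_roots_charpoly_eq_eigenvalues₀, List.ofFn_inj] at hroots
  funext i
  simp only [Matrix.IsHermitian.eigenvalues, hroots]

end Eigenvalues

variable {n : ℕ} {Γ : Set (Fin n → ℝ)} {f : (Fin n → ℝ) → ℝ}

/-- The set `Γ` as a bundled convex cone. -/
def IsGammaCone.cone (hΓ : IsGammaCone n Γ) : ConvexCone ℝ (Fin n → ℝ) where
  carrier := Γ
  smul_mem' c hc x hx := hΓ.2.2.1 x hx c hc
  add_mem' x hx y hy := by
    have hmid : (1 / 2 : ℝ) • x + (1 / 2 : ℝ) • y ∈ Γ :=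
      hΓ.2.1 hx hy (by norm_num) (by norm_num) (by norm_num)
    convert hΓ.2.2.1 _ hmid 2 two_pos using 1
    module

lemma IsGammaCone.const_mem (hΓ : IsGammaCone n Γ) {c : ℝ} (hc : 0 < c) :
    (fun _ => c) ∈ Γ := by
  refine hΓ.2.2.2.2.2.1 fun l _ hl => Finset.sum_pos (fun _ _ => Finset.prod_pos fun _ _ => hc) ?_
  simpa only [Finset.powersetCard_nonempty, Finset.card_univ, Fintype.card_fin] using hl

lemma IsGammaCone.dim_pos (hΓ : IsGammaCone n Γ) : 0 < n := by
  by_contra hn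
  obtain rfl : n = 0 := by omega
  exact hΓ.2.2.2.2.1 (eq_univ_of_forall fun x => Subsingleton.elim (fun _ => 1) x ▸
    hΓ.const_mem one_pos)

lemma IsHessianDensity.const_pos (hf : IsHessianDensity n Γ f) (hΓ : IsGammaCone n Γ) {c : ℝ}
    (hc : 0 < c) : 0 < f fun _ => c := by
  have hmem : ∀ {c : ℝ}, 0 < c → (fun _ : Fin n => c) ∈ closure Γ :=
    fun hc => subset_closure (hΓ.const_mem hc)
  have hne : (fun _ : Fin n => c / 2) ≠ fun _ => c := fun h =>
    (half_lt_self hc).ne (congrFun h ⟨0, hΓ.dim_pos⟩)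
  exact (hf.1 _ (hmem (half_pos hc))).trans_lt
    (hf.2.2.2.1 _ (hmem (half_pos hc)) _ (hmem hc) (fun _ => (half_lt_self hc).le) hne)

lemma coe_le_Fop_iff {H : Matrix (Fin n) (Fin n) ℂ} {x : ℝ} :
    (x : EReal) ≤ Fop f Γ H ↔
      ∃ hH : H.IsHermitian, hH.eigenvalues ∈ closure Γ ∧ x ≤ f hH.eigenvalues := by
  unfold Fop
  split_ifs with hH hmem
  · simp [hH, hmem]
  · simp [hmem]
  · simp [hH]

/-- A definite amount is gained by adding a positive multiple of the identity: this replaces a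
strict monotonicity of the equation. -/
lemma IsHessianDensity.le_Fop_add_smul_one (hf : IsHessianDensity n Γ f) (hΓ : IsGammaCone n Γ)
    {c δ : ℝ} (hc : 0 < c) (hδ : 0 < δ) (hδ₁ : δ < 1) {H : Matrix (Fin n) (Fin n) ℂ} {x : ℝ}
    (hx : (x : EReal) ≤ Fop f Γ H) :
    (((1 - δ) * x + δ * f (fun _ => c / δ) : ℝ) : EReal) ≤ Fop f Γ (H + c • 1) := by
  rw [← Complex.coe_smul]
  obtain ⟨hH, hmem, hxf⟩ := coe_le_Fop_iff.mp hx
  have hHc := isHermitian_add_ofReal_smul_one hH c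
  set y : Fin n → ℝ := fun _ => c / δ
  have hy : y ∈ hΓ.cone.closure := subset_closure (hΓ.const_mem (div_pos hc hδ))
  have hshift : hHc.eigenvalues = hH.eigenvalues + δ • y := by
    rw [eigenvalues_add_smul_one hH c]
    funext i
    simp only [y, Pi.add_apply, Pi.smul_apply, smul_eq_mul, mul_div_cancel₀ c hδ.ne']
  have hle := one_sub_mul_add_mul_le_of_concaveOn_of_nonneg (C := hΓ.cone.closure) hf.2.2.1 hf.1
    hmem hy hδ hδ₁
  refine coe_le_Fop_iff.mpr ⟨hHc, ?_, ?_⟩ <;> rw [hshift]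
  · exact hΓ.cone.closure.add_mem hmem (hΓ.cone.closure.smul_mem hδ hy)
  · linarith [mul_le_mul_of_nonneg_left hxf (sub_nonneg.mpr hδ₁.le)]

end HessianOperator

section SpatialHessian

section QuadraticPolynomial

variable {E : Type*} [NormedAddCommGroup E] [NormedSpace ℝ E]

/-- The quadratic polynomial `p ↦ c + L (p - a) + Q (p - a, p - a)` centred at `a`. -/
noncomputable def quadraticPolynomial (c : ℝ) (L : E →L[ℝ] ℝ) (Q : E →L[ℝ] E →L[ℝ] ℝ)
    (a p : E) : ℝ :=
  c + L (p - a) + Q (p - a) (p - a)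

variable (c : ℝ) (L : E →L[ℝ] ℝ) (Q : E →L[ℝ] E →L[ℝ] ℝ) (a : E)

lemma quadraticPolynomial_self : quadraticPolynomial c L Q a a = c := by
  simp [quadraticPolynomial]

lemma contDiff_quadraticPolynomial {m : WithTop ℕ∞} :
    ContDiff ℝ m (quadraticPolynomial c L Q a) := by
  unfold quadraticPolynomial
  fun_prop

lemma hasFDerivAt_quadraticPolynomial (p : E) :
    HasFDerivAt (quadraticPolynomial c L Q a) (L + (Q + Q.flip) (p - a)) p := by
  have hid : HasFDerivAt (fun p : E => p - a) (ContinuousLinearMap.id ℝ E) p :=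
    (hasFDerivAt_id p).sub_const a
  have hL := L.hasFDerivAt.comp p hid
  have hQ := (Q.hasFDerivAt.comp p hid).clm_apply hid
  refine ((hL.const_add c).add hQ).congr_fderiv ?_
  ext h
  simp

lemma fderiv_fderiv_quadraticPolynomial (p : E) :
    fderiv ℝ (fderiv ℝ (quadraticPolynomial c L Q a)) p = Q + Q.flip := by
  have hfderiv : fderiv ℝ (quadraticPolynomial c L Q a) = fun p => L + (Q + Q.flip) (p - a) :=
    funext fun p => (hasFDerivAt_quadraticPolynomial c L Q a p).fderiv
  rw [hfderiv, fderiv_const_add]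
  exact ((Q + Q.flip).hasFDerivAt.comp p ((hasFDerivAt_id p).sub_const a)).fderiv

end QuadraticPolynomial

variable {n : ℕ}

/-- The Hermitian matrix `(∂²/∂z_j∂z̄_k)_{j,k}` of a function on `ℂⁿ` whose real second derivative
is the bilinear form `b`. -/
noncomputable def leviMatrix :
    ((Fin n → ℂ) →L[ℝ] (Fin n → ℂ) →L[ℝ] ℝ) →ₗ[ℝ] Matrix (Fin n) (Fin n) ℂ where
  toFun b := Matrix.of fun j k =>
    (((b (Pi.single j 1) (Pi.single k 1) +
        b (Pi.single j Complex.I) (Pi.single k Complex.I)) / 4 : ℝ) : ℂ) +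
      Complex.I * (((b (Pi.single j 1) (Pi.single k Complex.I) -
        b (Pi.single j Complex.I) (Pi.single k 1)) / 4 : ℝ) : ℂ)
  map_add' b b' := by
    ext j k
    simp only [Matrix.of_apply, Matrix.add_apply, add_apply]
    push_cast
    ring
  map_smul' r b := by
    ext j k
    simp only [Matrix.of_apply, Matrix.smul_apply, smul_apply, smul_eq_mul, RingHom.id_apply,
      Complex.real_smul]
    push_cast
    ring

lemma complexHessian_eq_leviMatrix (u : (Fin n → ℂ) → ℝ) (z : Fin n → ℂ) :
    complexHessian u z = leviMatrix (fderiv ℝ (fderiv ℝ u) z) := by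
  ext j k
  simp [complexHessian, leviMatrix, iteratedFDeriv_two_apply]

lemma complexHessian_sub {u v : (Fin n → ℂ) → ℝ} {z : Fin n → ℂ} (hu : ContDiffAt ℝ 2 u z)
    (hv : ContDiffAt ℝ 2 v z) :
    complexHessian (u - v) z = complexHessian u z - complexHessian v z := by
  ext j k
  simp only [complexHessian, iteratedFDeriv_sub_apply hu hv, Matrix.sub_apply, sub_apply]
  push_cast
  ring

lemma complexHessian_quadraticPolynomial (c : ℝ) (L : (Fin n → ℂ) →L[ℝ] ℝ)
    (Q : (Fin n → ℂ) →L[ℝ] (Fin n → ℂ) →L[ℝ] ℝ) (a z : Fin n → ℂ) :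
    complexHessian (quadraticPolynomial c L Q a) z = leviMatrix (Q + Q.flip) := by
  rw [complexHessian_eq_leviMatrix, fderiv_fderiv_quadraticPolynomial]

/-- The real Euclidean inner product of `ℂⁿ`, whose type `Fin n → ℂ` carries the sup norm. -/
noncomputable def euclideanForm (n : ℕ) : (Fin n → ℂ) →L[ℝ] (Fin n → ℂ) →L[ℝ] ℝ :=
  ∑ i, (innerSL ℝ (E := ℂ)).bilinearComp
    (ContinuousLinearMap.proj (R := ℝ) (φ := fun _ : Fin n => ℂ) i)
    (ContinuousLinearMap.proj (R := ℝ) (φ := fun _ : Fin n => ℂ) i)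

lemma euclideanForm_apply (v w : Fin n → ℂ) : euclideanForm n v w = ∑ i, inner ℝ (v i) (w i) := by
  simp [euclideanForm]

lemma euclideanForm_symm (v w : Fin n → ℂ) : euclideanForm n v w = euclideanForm n w v := by
  simp only [euclideanForm_apply, real_inner_comm]

lemma flip_euclideanForm : (euclideanForm n).flip = euclideanForm n := by
  ext v w
  exact euclideanForm_symm w v

lemma sq_norm_le_euclideanForm (v : Fin n → ℂ) : ‖v‖ ^ 2 ≤ euclideanForm n v v := by
  have hterm : ∀ i ∈ Finset.univ, (0 : ℝ) ≤ inner ℝ (v i) (v i) := fun _ _ =>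
    real_inner_self_nonneg
  rw [euclideanForm_apply]
  refine (Real.le_sqrt (norm_nonneg v) (Finset.sum_nonneg hterm)).mp
    ((pi_norm_le_iff_of_nonneg (Real.sqrt_nonneg _)).mpr fun i => Real.le_sqrt_of_sq_le ?_)
  rw [← real_inner_self_eq_norm_sq]
  exact Finset.single_le_sum hterm (Finset.mem_univ i)

lemma leviMatrix_euclideanForm : leviMatrix (euclideanForm n) = (1 / 2 : ℝ) • 1 := by
  have hsingle : ∀ j k (x y : ℂ), euclideanForm n (Pi.single j x) (Pi.single k y) =
      if j = k then inner ℝ x y else 0 := fun j k x y => by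
    rw [euclideanForm_apply, Finset.sum_eq_single j (fun i _ hi => by simp [hi]) (by simp)]
    by_cases hjk : j = k
    · subst hjk; simp
    · simp [hjk]
  ext j k
  change ((_ : ℝ) : ℂ) + _ = _
  simp only [hsingle, Matrix.smul_apply, Matrix.one_apply]
  by_cases hjk : j = k
  · simp [hjk, Complex.inner]; norm_num
  · simp [hjk]

/-- The form `K t t' + j ⟨z, z'⟩` on `ℝ × ℂⁿ`. -/
noncomputable def spacetimeForm (n : ℕ) (K j : ℝ) :
    ℝ × (Fin n → ℂ) →L[ℝ] ℝ × (Fin n → ℂ) →L[ℝ] ℝ :=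
  K • (ContinuousLinearMap.mul ℝ ℝ).bilinearComp (.fst ℝ ℝ (Fin n → ℂ)) (.fst ℝ ℝ (Fin n → ℂ)) +
    j • (euclideanForm n).bilinearComp (.snd ℝ ℝ (Fin n → ℂ)) (.snd ℝ ℝ (Fin n → ℂ))

lemma spacetimeForm_apply (K j : ℝ) (x y : ℝ × (Fin n → ℂ)) :
    spacetimeForm n K j x y = K * (x.1 * y.1) + j * euclideanForm n x.2 y.2 := by
  simp [spacetimeForm]

lemma min_mul_sq_norm_le_spacetimeForm {K j : ℝ} (hK : 0 ≤ K) (hj : 0 ≤ j)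
    (x : ℝ × (Fin n → ℂ)) : min K j * ‖x‖ ^ 2 ≤ spacetimeForm n K j x x := by
  have hz := sq_norm_le_euclideanForm x.2
  have ht : ‖x.1‖ ^ 2 = x.1 * x.1 := by rw [Real.norm_eq_abs, sq_abs, sq]
  rw [spacetimeForm_apply, Prod.norm_def, ← ht]
  rcases max_choice ‖x.1‖ ‖x.2‖ with hmax | hmax <;> rw [hmax]
  · have hle : min K j * ‖x.1‖ ^ 2 ≤ K * ‖x.1‖ ^ 2 := by gcongr; exact min_le_left K j
    linarith [mul_nonneg hj ((sq_nonneg _).trans hz)]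
  · have hle : min K j * ‖x.2‖ ^ 2 ≤ j * euclideanForm n x.2 x.2 := by
      gcongr
      exact min_le_right K j
    linarith [mul_nonneg hK (sq_nonneg ‖x.1‖)]

lemma isPosDefForm_spacetimeForm {K j : ℝ} (hK : 0 < K) (hj : 0 < j) :
    IsPosDefForm (spacetimeForm n K j) where
  symm x y := by simp only [spacetimeForm_apply, euclideanForm_symm x.2, mul_comm x.1]
  pos x hx := (mul_pos (lt_min hK hj) (by positivity)).trans_le
    (min_mul_sq_norm_le_spacetimeForm hK.le hj.le x)

/-- The matrix `(∂²/∂z_j∂z̄_k)_{j,k}` of `z ↦ Q ((0, z), (0, z))`. -/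
noncomputable def spatialLeviMatrix :
    (ℝ × (Fin n → ℂ) →L[ℝ] ℝ × (Fin n → ℂ) →L[ℝ] ℝ) →ₗ[ℝ] Matrix (Fin n) (Fin n) ℂ where
  toFun Q := leviMatrix ((Q + Q.flip).bilinearComp (.inr ℝ ℝ _) (.inr ℝ ℝ _))
  map_add' Q Q' := by
    rw [← map_add]
    congr 1
    ext v w
    simp only [ContinuousLinearMap.bilinearComp_apply, add_apply, ContinuousLinearMap.flip_apply]
    ring
  map_smul' r Q := by
    rw [RingHom.id_apply, ← map_smul]
    congr 1
    ext v w
    simp only [ContinuousLinearMap.bilinearComp_apply, add_apply, smul_apply,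
      ContinuousLinearMap.flip_apply, smul_eq_mul]
    ring

lemma spatialLeviMatrix_spacetimeForm (K j : ℝ) :
    spatialLeviMatrix (spacetimeForm n K j) = j • 1 := by
  have hform : (spacetimeForm n K j + (spacetimeForm n K j).flip).bilinearComp (.inr ℝ ℝ _)
      (.inr ℝ ℝ _) = (2 * j) • euclideanForm n := by
    ext v w
    simp only [ContinuousLinearMap.bilinearComp_apply, add_apply, smul_apply, smul_eq_mul,
      ContinuousLinearMap.flip_apply, spacetimeForm_apply, ContinuousLinearMap.inr_apply,
      euclideanForm_symm w v]
    ring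
  change leviMatrix _ = _
  rw [hform, map_smul, leviMatrix_euclideanForm, smul_smul]
  congr 1
  ring

lemma complexHessian_quadraticPolynomial_slice (c : ℝ) (L : ℝ × (Fin n → ℂ) →L[ℝ] ℝ)
    (Q : ℝ × (Fin n → ℂ) →L[ℝ] ℝ × (Fin n → ℂ) →L[ℝ] ℝ) (a : ℝ × (Fin n → ℂ)) :
    complexHessian (fun z => quadraticPolynomial c L Q a (a.1, z)) a.2 = spatialLeviMatrix Q := by
  have hslice : (fun z => quadraticPolynomial c L Q a (a.1, z)) =
      quadraticPolynomial c (L.comp (.inr ℝ ℝ _))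
        (Q.bilinearComp (.inr ℝ ℝ _) (.inr ℝ ℝ _)) a.2 := by
    funext z
    have hsub : ((a.1, z) : ℝ × (Fin n → ℂ)) - a = (0, z - a.2) := by ext <;> simp
    simp only [quadraticPolynomial, hsub, ContinuousLinearMap.comp_apply,
      ContinuousLinearMap.bilinearComp_apply, ContinuousLinearMap.inr_apply]
  rw [hslice, complexHessian_quadraticPolynomial]
  rfl

end SpatialHessian

section TestFunctions

variable {n : ℕ} {f : (Fin n → ℝ) → ℝ} {Γ : Set (Fin n → ℝ)} {G : ℝ → (Fin n → ℂ) → ℝ → ℝ}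
  {g : (Fin n → ℂ) → ℝ} {D : Set (ℝ × (Fin n → ℂ))} {u v φ q : ℝ × (Fin n → ℂ) → ℝ}
  {a b : ℝ × (Fin n → ℂ)} {L : ℝ × (Fin n → ℂ) →L[ℝ] ℝ}
  {A : ℝ × (Fin n → ℂ) →L[ℝ] ℝ × (Fin n → ℂ) →L[ℝ] ℝ} {κ : ℝ}

lemma eventually_differentiableAt_and_contDiffAt_slices (hq : ContDiffAt ℝ 2 q a) :
    ∀ᶠ p in 𝓝 a, DifferentiableAt ℝ (fun t => q (t, p.2)) p.1 ∧
      ContDiffAt ℝ 2 (fun z => q (p.1, z)) p.2 := by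
  filter_upwards [hq.eventually (by simp)] with p hp
  exact ⟨(hp.comp p.1 (contDiffAt_id.prodMk contDiffAt_const)).differentiableAt two_ne_zero,
    hp.comp p.2 (contDiffAt_const.prodMk contDiffAt_id)⟩

lemma hasDerivAt_time_slice (hq : HasFDerivAt q L a) :
    HasDerivAt (fun t => q (t, a.2)) (L (1, 0)) a.1 :=
  hq.comp_hasDerivAt (f := fun t => (t, a.2)) a.1
    ((hasDerivAt_id a.1).prodMk (hasDerivAt_const a.1 a.2))

lemma hasDerivAt_quadraticPolynomial_time_slice (c : ℝ) (L : ℝ × (Fin n → ℂ) →L[ℝ] ℝ)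
    (Q : ℝ × (Fin n → ℂ) →L[ℝ] ℝ × (Fin n → ℂ) →L[ℝ] ℝ) (a : ℝ × (Fin n → ℂ)) :
    HasDerivAt (fun t => quadraticPolynomial c L Q a (t, a.2)) (L (1, 0)) a.1 := by
  simpa only [sub_self, map_zero, add_zero] using
    hasDerivAt_time_slice (hasFDerivAt_quadraticPolynomial c L Q a a)

lemma InSuperjetWithin.eventually_le_quadraticPolynomial (h : InSuperjetWithin univ u a L A)
    (hκ : 0 < κ) : ∀ᶠ p in 𝓝 a,
      u p ≤ quadraticPolynomial (u a) L ((1 / 2 : ℝ) • A + κ • spacetimeForm n 1 1) a p := by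
  have hjet := h κ hκ
  rw [nhdsWithin_univ] at hjet
  filter_upwards [hjet] with p hp
  have hnorm := min_mul_sq_norm_le_spacetimeForm zero_le_one zero_le_one (p - a)
  rw [min_self, one_mul] at hnorm
  simp only [quadraticPolynomial, add_apply, smul_apply, smul_eq_mul]
  linarith [mul_le_mul_of_nonneg_left hnorm hκ.le]

lemma ParSubsolOn.le_Fop_of_inSuperjetWithin_add (hu : ParSubsolOn f Γ G g D u) (ha : a ∈ D)
    (hφ : ContDiffAt ℝ 2 φ a) (hjet : InSuperjetWithin univ (u + φ) a L A) (hκ : 0 < κ) :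
    ((Real.exp (L (1, 0) - deriv (fun t => φ (t, a.2)) a.1 + G a.1 a.2 (u a)) * g a.2 : ℝ) : EReal)
      ≤ Fop f Γ ((1 / 2 : ℝ) • spatialLeviMatrix A + κ • 1 -
        complexHessian (fun z => φ (a.1, z)) a.2) := by
  set P := quadraticPolynomial ((u + φ) a) L ((1 / 2 : ℝ) • A + κ • spacetimeForm n 1 1) a with hP
  have hPφ : ContDiffAt ℝ 2 (P - φ) a := (contDiff_quadraticPolynomial ..).contDiffAt.sub hφ
  have hval : (P - φ) a = u a := by simp [hP, quadraticPolynomial_self]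
  have htest : IsUpperTestAt u (P - φ) a := by
    refine ⟨hval, ?_, eventually_differentiableAt_and_contDiffAt_slices hPφ⟩
    filter_upwards [hjet.eventually_le_quadraticPolynomial hκ] with p hp
    exact le_sub_iff_add_le.mpr hp
  obtain ⟨hφt, hφz⟩ := (eventually_differentiableAt_and_contDiffAt_slices hφ).self_of_nhds
  have hderiv : deriv (fun t => (P - φ) (t, a.2)) a.1 =
      L (1, 0) - deriv (fun t => φ (t, a.2)) a.1 :=
    ((hasDerivAt_quadraticPolynomial_time_slice _ L _ a).sub hφt.hasDerivAt).deriv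
  have hhess : complexHessian (fun z => (P - φ) (a.1, z)) a.2 =
      (1 / 2 : ℝ) • spatialLeviMatrix A + κ • 1 - complexHessian (fun z => φ (a.1, z)) a.2 := by
    have hPz : ContDiffAt ℝ 2 (fun z => P (a.1, z)) a.2 :=
      (eventually_differentiableAt_and_contDiffAt_slices (q := P) (a := a)
        (contDiff_quadraticPolynomial ..).contDiffAt).self_of_nhds.2
    refine (complexHessian_sub hPz hφz).trans ?_
    rw [hP, complexHessian_quadraticPolynomial_slice, map_add, map_smul, map_smul,
      spatialLeviMatrix_spacetimeForm, one_smul]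
  have h := hu.2 a ha _ htest
  rwa [hval, hderiv, hhess] at h

lemma ParSupersolOn.Fop_le_of_inSuperjetWithin_neg (hv : ParSupersolOn f Γ G g D v) (hb : b ∈ D)
    (hjet : InSuperjetWithin univ (-v) b L A) (hκ : 0 < κ) :
    Fop f Γ (-((1 / 2 : ℝ) • spatialLeviMatrix A + κ • 1)) ≤
      ((Real.exp (-L (1, 0) + G b.1 b.2 (v b)) * g b.2 : ℝ) : EReal) := by
  set Q := (1 / 2 : ℝ) • A + κ • spacetimeForm n 1 1 with hQ
  set P := quadraticPolynomial (v b) (-L) (-Q) b with hP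
  have hval : P b = v b := quadraticPolynomial_self ..
  have htest : IsLowerTestAt v P b := by
    refine ⟨hval, ?_, eventually_differentiableAt_and_contDiffAt_slices
      (contDiff_quadraticPolynomial ..).contDiffAt⟩
    filter_upwards [hjet.eventually_le_quadraticPolynomial hκ] with p hp
    simp only [quadraticPolynomial, Pi.neg_apply, ← hQ] at hp
    simp only [hP, quadraticPolynomial, neg_apply]
    linarith
  have h := hv.2 b hb _ htest
  rw [hval, (hasDerivAt_quadraticPolynomial_time_slice _ (-L) _ b).deriv,
    complexHessian_quadraticPolynomial_slice, map_neg spatialLeviMatrix, hQ, map_add, map_smul,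
    map_smul, spatialLeviMatrix_spacetimeForm, one_smul] at h
  exact h

end TestFunctions

section Penalty

variable {n : ℕ}

/-- The penalty added to the subsolution: `ε |z|²` makes its Levi form strictly smaller and
`-η / (T - t)` both pushes the maximum away from `t = T` and makes it a strict subsolution. -/
noncomputable def parabolicPenalty (ε η T : ℝ) (p : ℝ × (Fin n → ℂ)) : ℝ :=
  ε * euclideanForm n p.2 p.2 - η / (T - p.1)

variable {ε η T : ℝ} {a b : ℝ × (Fin n → ℂ)}

lemma contDiffAt_parabolicPenalty (ha : a.1 < T) : ContDiffAt ℝ 2 (parabolicPenalty ε η T) a := by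
  have hne : T - a.1 ≠ 0 := (sub_pos.mpr ha).ne'
  unfold parabolicPenalty
  fun_prop (disch := exact hne)

lemma deriv_parabolicPenalty (ha : a.1 < T) :
    deriv (fun t => parabolicPenalty ε η T (t, a.2)) a.1 = -(η / (T - a.1) ^ 2) := by
  have hne : T - a.1 ≠ 0 := (sub_pos.mpr ha).ne'
  have hinv := (((hasDerivAt_id a.1).const_sub T).fun_inv hne).const_mul η
  have h := hinv.const_sub (ε * euclideanForm n a.2 a.2)
  simp only [id] at h
  simp only [parabolicPenalty, div_eq_mul_inv]
  rw [h.deriv]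
  ring

lemma complexHessian_parabolicPenalty :
    complexHessian (fun z => parabolicPenalty ε η T (a.1, z)) a.2 = ε • 1 := by
  have hquad : (fun z => parabolicPenalty ε η T (a.1, z)) =
      quadraticPolynomial (-(η / (T - a.1))) 0 (ε • euclideanForm n) 0 := by
    funext z
    simp only [parabolicPenalty, quadraticPolynomial, sub_zero, smul_apply, smul_eq_mul,
      zero_apply]
    ring
  have hflip : (ε • euclideanForm n).flip = ε • euclideanForm n :=
    congrArg (ε • ·) flip_euclideanForm
  rw [hquad, complexHessian_quadraticPolynomial, hflip, map_add, map_smul,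
    leviMatrix_euclideanForm]
  module

variable {f : (Fin n → ℝ) → ℝ} {Γ : Set (Fin n → ℝ)} {G : ℝ → (Fin n → ℂ) → ℝ → ℝ}
  {g : (Fin n → ℂ) → ℝ} {D : Set (ℝ × (Fin n → ℂ))} {u v : ℝ × (Fin n → ℂ) → ℝ}
  {L M : ℝ × (Fin n → ℂ) →L[ℝ] ℝ} {A : ℝ × (Fin n → ℂ) →L[ℝ] ℝ × (Fin n → ℂ) →L[ℝ] ℝ}

lemma rhs_subsol_add_le_rhs_supersol (hΓ : IsGammaCone n Γ) (hf : IsHessianDensity n Γ f)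
    (hu : ParSubsolOn f Γ G g D u) (hv : ParSupersolOn f Γ G g D v) (ha : a ∈ D) (hb : b ∈ D)
    (haT : a.1 < T) (hε : 0 < ε)
    (hjet_u : InSuperjetWithin univ (u + parabolicPenalty ε η T) a L A)
    (hjet_v : InSuperjetWithin univ (-v) b M (-A)) {δ : ℝ} (hδ : 0 < δ) (hδ₁ : δ < 1) :
    (1 - δ) * (Real.exp (L (1, 0) + η / (T - a.1) ^ 2 + G a.1 a.2 (u a)) * g a.2) +
        δ * f (fun _ => ε / 2 / δ) ≤
      Real.exp (-M (1, 0) + G b.1 b.2 (v b)) * g b.2 := by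
  have hε₄ : 0 < ε / 4 := by positivity
  have hsub := hu.le_Fop_of_inSuperjetWithin_add ha (contDiffAt_parabolicPenalty haT) hjet_u hε₄
  have hsup := hv.Fop_le_of_inSuperjetWithin_neg hb hjet_v hε₄
  rw [deriv_parabolicPenalty haT, complexHessian_parabolicPenalty, sub_neg_eq_add] at hsub
  have hgain := hf.le_Fop_add_smul_one hΓ (half_pos hε) hδ hδ₁ hsub
  have hmatrix : (1 / 2 : ℝ) • spatialLeviMatrix A + (ε / 4) • 1 - ε • 1 + (ε / 2) • 1 =
      -((1 / 2 : ℝ) • spatialLeviMatrix (-A) + (ε / 4) • 1) := by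
    rw [map_neg spatialLeviMatrix]
    module
  rw [hmatrix] at hgain
  exact EReal.coe_le_coe_iff.mp (hgain.trans hsup)

end Penalty

section RhsDefect

variable {n : ℕ} {f : (Fin n → ℝ) → ℝ} {Γ : Set (Fin n → ℝ)} {G : ℝ → (Fin n → ℂ) → ℝ → ℝ}
  {g : (Fin n → ℂ) → ℝ} {I : Set (ℝ × (Fin n → ℂ))} {u v : ℝ × (Fin n → ℂ) → ℝ}
  {P : Set ((ℝ × (Fin n → ℂ)) × (ℝ × (Fin n → ℂ)))} {K σ R : ℝ}

/-- The excess of the right-hand side of the supersolution at `b` over that of the subsolution at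
`a`, when the time slopes are `K (a.1 - b.1 ± e)`, both values are replaced by `y`, and the
subsolution is strict with gain `σ`. -/
noncomputable def rhsDefect (G : ℝ → (Fin n → ℂ) → ℝ → ℝ) (g : (Fin n → ℂ) → ℝ) (K σ : ℝ)
    (a b : ℝ × (Fin n → ℂ)) (y e : ℝ) : ℝ :=
  Real.exp (K * (a.1 - b.1 + e) + G b.1 b.2 y) * g b.2 -
    Real.exp (K * (a.1 - b.1 - e) + σ + G a.1 a.2 y) * g a.2

lemma continuousOn_rhsDefect
    (hG : ContinuousOn (fun p : (ℝ × (Fin n → ℂ)) × ℝ => G p.1.1 p.1.2 p.2) (I ×ˢ univ))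
    (hg : ContinuousOn (fun p : ℝ × (Fin n → ℂ) => g p.2) I) :
    ContinuousOn (fun x : (((ℝ × (Fin n → ℂ)) × (ℝ × (Fin n → ℂ))) × ℝ) × ℝ =>
      rhsDefect G g K σ x.1.1.1 x.1.1.2 x.1.2 x.2) (((I ×ˢ I) ×ˢ univ) ×ˢ univ) := by
  have hGa := hG.comp (s := ((I ×ˢ I) ×ˢ univ) ×ˢ (univ : Set ℝ))
    (f := fun x => (x.1.1.1, x.1.2)) (by fun_prop) fun x hx => ⟨hx.1.1.1, mem_univ _⟩
  have hGb := hG.comp (s := ((I ×ˢ I) ×ˢ univ) ×ˢ (univ : Set ℝ))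
    (f := fun x => (x.1.1.2, x.1.2)) (by fun_prop) fun x hx => ⟨hx.1.1.2, mem_univ _⟩
  have hga := hg.comp (s := ((I ×ˢ I) ×ˢ (univ : Set ℝ)) ×ˢ (univ : Set ℝ))
    (f := fun x => x.1.1.1) (by fun_prop) fun x hx => hx.1.1.1
  have hgb := hg.comp (s := ((I ×ˢ I) ×ˢ (univ : Set ℝ)) ×ˢ (univ : Set ℝ))
    (f := fun x => x.1.1.2) (by fun_prop) fun x hx => hx.1.1.2
  refine ((ContinuousOn.add ?_ hGb).rexp.mul hgb).sub ((ContinuousOn.add ?_ hGa).rexp.mul hga) <;>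
    fun_prop

lemma exists_le_rhsDefect_zero_of_forall_ge (hP : IsCompact P) (hPI : P ⊆ I ×ˢ I)
    (hG : ContinuousOn (fun p : (ℝ × (Fin n → ℂ)) × ℝ => G p.1.1 p.1.2 p.2) (I ×ˢ univ))
    (hg : ContinuousOn (fun p : ℝ × (Fin n → ℂ) => g p.2) I) (hK : 0 ≤ K) {c K₀ : ℝ}
    (hK₀ : 0 < K₀) (h : ∀ j ≥ K₀, ∀ r > 0, ∃ a b y e, (a, b) ∈ P ∧ |e| < r ∧ |y| ≤ R ∧
      K * (a.1 - b.1) ^ 2 + j * ‖a.2 - b.2‖ ^ 2 ≤ R ∧ c ≤ rhsDefect G g K σ a b y e) :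
    ∃ a b y, (a, b) ∈ P ∧ |y| ≤ R ∧ a.2 = b.2 ∧ K * (a.1 - b.1) ^ 2 ≤ R ∧
      c ≤ rhsDefect G g K σ a b y 0 := by
  choose a b y e hab he hy hR hc using fun k : ℕ =>
    h (K₀ + k) (le_add_of_nonneg_right k.cast_nonneg) (1 / ((k : ℝ) + 1)) Nat.one_div_pos_of_nat
  obtain ⟨⟨⟨a', b'⟩, y'⟩, ⟨hab', hy'⟩, φ, hφ, hlim⟩ :=
    (hP.prod (isCompact_Icc (a := -R) (b := R))).tendsto_subseq
      (x := fun k => ((a k, b k), y k)) fun k => ⟨hab k, abs_le.mp (hy k)⟩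
  have hφ_atTop := hφ.tendsto_atTop
  have hlim_a := hlim.fst_nhds.fst_nhds
  have hlim_b := hlim.fst_nhds.snd_nhds
  have hlim_e : Tendsto (e ∘ φ) atTop (𝓝 0) :=
    (squeeze_zero_norm (fun k => (he k).le) tendsto_one_div_add_atTop_nhds_zero_nat).comp hφ_atTop
  have htime : K * (a'.1 - b'.1) ^ 2 ≤ R :=
    le_of_tendsto' (((hlim_a.fst_nhds.sub hlim_b.fst_nhds).pow 2).const_mul K) fun k =>
      (le_add_of_nonneg_right (by positivity)).trans (hR (φ k))
  have hspace : ‖a'.2 - b'.2‖ ^ 2 ≤ 0 := by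
    have hdiv : Tendsto (fun k : ℕ => R / (K₀ + k)) atTop (𝓝 0) :=
      tendsto_const_nhds.div_atTop (tendsto_atTop_add_const_left _ _ tendsto_natCast_atTop_atTop)
    refine le_of_tendsto_of_tendsto' ((hlim_a.snd_nhds.sub hlim_b.snd_nhds).norm.pow 2)
      (hdiv.comp hφ_atTop) fun k => ?_
    exact (le_div_iff₀' (by positivity)).mpr
      ((le_add_of_nonneg_left (by positivity)).trans (hR (φ k)))
  refine ⟨a', b', y', hab', abs_le.mpr hy', ?_, htime, ?_⟩
  · exact sub_eq_zero.mp (norm_eq_zero.mp (pow_eq_zero_iff two_ne_zero |>.mp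
      (hspace.antisymm (sq_nonneg _))))
  · have hcont := continuousOn_rhsDefect (K := K) (σ := σ) hG hg (((a', b'), y'), 0)
      ⟨⟨hPI hab', mem_univ _⟩, mem_univ _⟩
    exact ge_of_tendsto' (hcont.tendsto.comp (tendsto_nhdsWithin_iff.mpr
      ⟨hlim.prodMk_nhds hlim_e, .of_forall fun k => ⟨⟨hPI (hab (φ k)), mem_univ _⟩, mem_univ _⟩⟩))
      fun k => hc (φ k)

lemma eventually_rhsDefect_zero_nonpos (hP : IsCompact P) (hPI : P ⊆ I ×ˢ I)
    (hG : ContinuousOn (fun p : (ℝ × (Fin n → ℂ)) × ℝ => G p.1.1 p.1.2 p.2) (I ×ˢ univ))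
    (hg₀ : ∀ p ∈ I, 0 ≤ g p.2) (hσ : 0 < σ) (R : ℝ) :
    ∀ᶠ K in atTop, ∀ a b y, (a, b) ∈ P → |y| ≤ R → a.2 = b.2 → K * (a.1 - b.1) ^ 2 ≤ R →
      rhsDefect G g K σ a b y 0 ≤ 0 := by
  set S := Prod.fst '' P ∪ Prod.snd '' P
  have hS : IsCompact S := (hP.image continuous_fst).union (hP.image continuous_snd)
  have hSI : S ⊆ I := by
    rintro _ (⟨p, hp, rfl⟩ | ⟨p, hp, rfl⟩)
    exacts [(hPI hp).1, (hPI hp).2]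
  obtain ⟨ρ, hρ, hclose⟩ := Metric.uniformContinuousOn_iff.mp
    ((hS.prod (isCompact_Icc (a := -R) (b := R))).uniformContinuousOn_of_continuous
      (hG.mono (prod_mono hSI (subset_univ _)))) σ hσ
  filter_upwards [eventually_gt_atTop (R / ρ ^ 2), eventually_ge_atTop 0] with K hK hK_nonneg
    a b y hab hy hspace htime
  have hdist : |a.1 - b.1| < ρ := by
    refine abs_lt_of_sq_lt_sq (lt_of_mul_lt_mul_left (htime.trans_lt ?_) hK_nonneg) hρ.le
    exact (div_lt_iff₀ (by positivity)).mp hK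
  have hG_lt : G b.1 b.2 y ≤ σ + G a.1 a.2 y := by
    have h := hclose (b, y) ⟨.inr ⟨_, hab, rfl⟩, abs_le.mp hy⟩ (a, y)
      ⟨.inl ⟨_, hab, rfl⟩, abs_le.mp hy⟩ (by
        rw [dist_comm, dist_prod_same_right, Prod.dist_eq, hspace, dist_self, Real.dist_eq]
        exact max_lt hdist hρ)
    rw [Real.dist_eq] at h
    linarith [(abs_lt.mp h).2]
  have hga : 0 ≤ g a.2 := hg₀ a (hPI hab).1
  rw [rhsDefect, sub_nonpos, ← hspace, add_zero, sub_zero, add_assoc, hspace]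
  rw [hspace] at hga hG_lt
  gcongr

lemma le_rhsDefect (hΓ : IsGammaCone n Γ) (hf : IsHessianDensity n Γ f)
    (hsub : ParSubsolOn f Γ G g I u) (hsup : ParSupersolOn f Γ G g I v)
    {a b e : ℝ × (Fin n → ℂ)} (ha : a ∈ I) (hb : b ∈ I) {T : ℝ} (ha₀ : 0 ≤ a.1) (haT : a.1 < T)
    (hga : 0 ≤ g a.2) (hG : G a.1 a.2 (v b) ≤ G a.1 a.2 (u a)) {ε η : ℝ} (hε : 0 < ε)
    (hη : 0 ≤ η) (hσ : 0 < σ) (hση : 2 * σ ≤ η / T ^ 2) {j : ℝ}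
    {A : ℝ × (Fin n → ℂ) →L[ℝ] ℝ × (Fin n → ℂ) →L[ℝ] ℝ}
    (hjet_u : InSuperjetWithin univ (u + parabolicPenalty ε η T) a
      (spacetimeForm n K j (a - b - e)) A)
    (hjet_v : InSuperjetWithin univ (-v) b (spacetimeForm n K j (b - a - e)) (-A)) :
    (1 - Real.exp (-σ)) * f (fun _ => ε / 2 / (1 - Real.exp (-σ))) ≤
      rhsDefect G g K σ a b (v b) e.1 := by
  have hexp : Real.exp (-σ) < 1 := Real.exp_lt_one_iff.mpr (neg_neg_of_pos hσ)
  have h := rhs_subsol_add_le_rhs_supersol hΓ hf hsub hsup ha hb haT hε hjet_u hjet_v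
    (sub_pos.mpr hexp) (sub_lt_self 1 (Real.exp_pos _))
  have hslope_u : spacetimeForm n K j (a - b - e) (1, 0) = K * (a.1 - b.1 - e.1) := by
    simp only [spacetimeForm_apply, Prod.fst_sub, map_zero, mul_zero, add_zero, mul_one]
  have hslope_v : -spacetimeForm n K j (b - a - e) (1, 0) = K * (a.1 - b.1 + e.1) := by
    simp only [spacetimeForm_apply, Prod.fst_sub, map_zero, mul_zero, add_zero, mul_one]
    ring
  have hgain : η / T ^ 2 ≤ η / (T - a.1) ^ 2 := by
    have : 0 < T - a.1 := sub_pos.mpr haT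
    gcongr
    linarith
  rw [hslope_u, hslope_v, sub_sub_cancel, ← mul_assoc, ← Real.exp_add] at h
  have hle : Real.exp (K * (a.1 - b.1 - e.1) + σ + G a.1 a.2 (v b)) * g a.2 ≤
      Real.exp (-σ + (K * (a.1 - b.1 - e.1) + η / (T - a.1) ^ 2 + G a.1 a.2 (u a))) * g a.2 :=
    mul_le_mul_of_nonneg_right (Real.exp_le_exp.mpr (by linarith)) hga
  rw [rhsDefect]
  linarith

end RhsDefect

section Comparison

variable {n : ℕ} {f : (Fin n → ℝ) → ℝ} {Γ : Set (Fin n → ℝ)} {G : ℝ → (Fin n → ℂ) → ℝ → ℝ}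
  {g : (Fin n → ℂ) → ℝ} {Ω : Set (Fin n → ℂ)} {T M : ℝ} {u v : ℝ × (Fin n → ℂ) → ℝ}

/-- The parabolic boundary `∂_P Ω_T` of the cylinder `Ω_T = (0, T) × Ω`. -/
def parabolicBoundary (Ω : Set (Fin n → ℂ)) (T : ℝ) : Set (ℝ × (Fin n → ℂ)) :=
  ({0} ×ˢ closure Ω) ∪ (Ioo 0 T ×ˢ frontier Ω)

lemma parabolicBoundary_subset (hT : 0 < T) : parabolicBoundary Ω T ⊆ Ico 0 T ×ˢ closure Ω :=
  union_subset (prod_mono_left (singleton_subset_iff.mpr ⟨le_rfl, hT⟩))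
    (prod_mono Ioo_subset_Ico_self frontier_subset_closure)

lemma upperSemicontinuousOn_add_parabolicPenalty {D : Set (ℝ × (Fin n → ℂ))} (ε η : ℝ)
    (hu : UpperSemicontinuousOn u D) (hD : ∀ p ∈ D, p.1 < T) :
    UpperSemicontinuousOn (u + parabolicPenalty ε η T) D :=
  hu.add (ContinuousOn.upperSemicontinuousOn fun p hp =>
    (contDiffAt_parabolicPenalty (hD p hp)).continuousAt.continuousWithinAt)

lemma exists_pos_forall_mul_euclideanForm_le (hΩ : Bornology.IsBounded Ω) {θ : ℝ} (hθ : 0 < θ) :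
    ∃ ε > 0, ∀ z ∈ closure Ω, ε * euclideanForm n z z ≤ θ := by
  have hcont : Continuous fun z : Fin n → ℂ => euclideanForm n z z := by fun_prop
  obtain ⟨R, hR⟩ := (hΩ.isCompact_closure.image hcont).bddAbove
  have hR₁ : 0 < max R 1 := lt_max_of_lt_right one_pos
  refine ⟨θ / max R 1, div_pos hθ hR₁, fun z hz => ?_⟩
  rw [div_mul_eq_mul_div, div_le_iff₀ hR₁]
  gcongr
  exact (hR ⟨z, hz, rfl⟩).trans (le_max_left _ _)

lemma exists_parabolicPenalty (hΩo : IsOpen Ω) (hΩb : Bornology.IsBounded Ω)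
    (huv : ∃ C, ∀ p ∈ Ico 0 T ×ˢ closure Ω, u p - v p ≤ C) (hM : 0 ≤ M)
    (hbdry : ∀ p ∈ parabolicBoundary Ω T, u p - v p ≤ M) {p₀ : ℝ × (Fin n → ℂ)}
    (hp₀ : p₀ ∈ Ioo 0 T ×ˢ Ω) (hlt : M < u p₀ - v p₀) :
    ∃ ε > 0, ∃ η > 0, ∃ T' < T, ∃ m, p₀ ∈ Icc 0 T' ×ˢ closure Ω ∧
      m < u p₀ + parabolicPenalty ε η T p₀ - v p₀ ∧
      ∀ p ∈ Icc 0 T' ×ˢ closure Ω, parabolicPenalty ε η T p ≤ m ∧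
        (m ≤ u p + parabolicPenalty ε η T p - v p → p ∈ Ioo 0 T' ×ˢ Ω) := by
  obtain ⟨C, hC⟩ := huv
  set θ := u p₀ - v p₀ - M
  have : 0 < θ := sub_pos.mpr hlt
  obtain ⟨ε, hε, hεθ⟩ := exists_pos_forall_mul_euclideanForm_le hΩb (θ := θ / 4) (by positivity)
  have hτ : 0 < T - p₀.1 := sub_pos.mpr hp₀.1.2
  set η := θ / 4 * (T - p₀.1)
  have hη : 0 < η := by positivity
  obtain ⟨s, hsC, hs, hsτ⟩ : ∃ s, C ≤ η * s⁻¹ ∧ s ∈ Ioo 0 (T - p₀.1) :=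
    (((tendsto_inv_nhdsGT_zero.const_mul_atTop hη).eventually_ge_atTop C).and
      (Ioo_mem_nhdsGT hτ)).exists
  have hpen : ∀ p ∈ Icc 0 (T - s) ×ˢ closure Ω,
      parabolicPenalty ε η T p ≤ θ / 4 - η * (T - p.1)⁻¹ ∧ 0 ≤ η * (T - p.1)⁻¹ := by
    intro p hp
    have hpT : 0 < T - p.1 := by linarith [hp.1.2]
    exact ⟨sub_le_sub_right (hεθ p.2 hp.2) _, by positivity⟩
  have hp₀_mem : p₀ ∈ Icc 0 (T - s) ×ˢ closure Ω :=
    ⟨⟨hp₀.1.1.le, by linarith⟩, subset_closure hp₀.2⟩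
  refine ⟨ε, hε, η, hη, T - s, sub_lt_self T hs, M + θ / 2, hp₀_mem, ?_, fun p hp => ⟨?_, ?_⟩⟩
  · have hη₀ : η / (T - p₀.1) = θ / 4 := mul_div_cancel_right₀ _ hτ.ne'
    have hε₀ := mul_nonneg hε.le ((sq_nonneg _).trans (sq_norm_le_euclideanForm p₀.2))
    rw [parabolicPenalty, hη₀]
    linarith
  · linarith [hpen p hp]
  · intro hm
    obtain ⟨hpen_le, hpen_nonneg⟩ := hpen p hp
    have hnot : p ∉ parabolicBoundary Ω T := fun hp' => by linarith [hbdry p hp']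
    have h₀ : 0 < p.1 := hp.1.1.lt_of_ne fun h => hnot (.inl ⟨h.symm, hp.2⟩)
    have hT' : p.1 < T - s := by
      refine hp.1.2.lt_of_ne fun h => ?_
      rw [h, sub_sub_cancel] at hpen_le
      linarith [hC p ⟨⟨h₀.le, by linarith⟩, hp.2⟩]
    refine ⟨⟨h₀, hT'⟩, by_contra fun hpΩ => hnot (.inr ⟨⟨h₀, by linarith⟩, ?_⟩)⟩
    exact hΩo.frontier_eq ▸ ⟨hp.2, hpΩ⟩

lemma norm_le_of_spacetimeForm_self_le {K₀ K j R ρ : ℝ} (hK₀ : 0 < K₀) (hK : K₀ ≤ K)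
    (hj : K₀ ≤ j) (hρ : 0 ≤ ρ) (hR : R ≤ K₀ * ρ ^ 2) {x : ℝ × (Fin n → ℂ)}
    (hx : spacetimeForm n K j x x ≤ R) : ‖x‖ ≤ ρ := by
  refine (sq_le_sq₀ (norm_nonneg x) hρ).mp (le_of_mul_le_mul_left ?_ hK₀)
  calc K₀ * ‖x‖ ^ 2 ≤ min K j * ‖x‖ ^ 2 := by gcongr; exact le_min hK hj
    _ ≤ spacetimeForm n K j x x :=
      min_mul_sq_norm_le_spacetimeForm (hK₀.le.trans hK) (hK₀.le.trans hj) x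
    _ ≤ K₀ * ρ ^ 2 := hx.trans hR

lemma exists_pos_forall_exists_le_rhsDefect (hΓ : IsGammaCone n Γ) (hf : IsHessianDensity n Γ f)
    (hΩo : IsOpen Ω) (hΩb : Bornology.IsBounded Ω)
    (hGm : ∀ p ∈ Ioo 0 T ×ˢ Ω, Monotone (G p.1 p.2)) (hg₀ : ∀ z ∈ Ω, 0 ≤ g z)
    (husc : UpperSemicontinuousOn u (Ico 0 T ×ˢ closure Ω))
    (hvlsc : LowerSemicontinuousOn v (Ico 0 T ×ˢ closure Ω))
    (huv : ∃ C, ∀ p ∈ Ico 0 T ×ˢ closure Ω, u p - v p ≤ C)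
    (hsub : ParSubsolOn f Γ G g (Ioo 0 T ×ˢ Ω) u) (hsup : ParSupersolOn f Γ G g (Ioo 0 T ×ˢ Ω) v)
    (hM : 0 ≤ M) (hbdry : ∀ p ∈ parabolicBoundary Ω T, u p - v p ≤ M) {p₀ : ℝ × (Fin n → ℂ)}
    (hp₀ : p₀ ∈ Ioo 0 T ×ˢ Ω) (hlt : M < u p₀ - v p₀) :
    ∃ σ > 0, ∃ c > 0, ∃ P ⊆ (Ioo 0 T ×ˢ Ω) ×ˢ (Ioo 0 T ×ˢ Ω), IsCompact P ∧ ∃ R, ∃ K₀ > 0,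
      ∀ K ≥ K₀, ∀ j ≥ K₀, ∀ r > 0, ∃ a b y e, (a, b) ∈ P ∧ |e| < r ∧ |y| ≤ R ∧
        K * (a.1 - b.1) ^ 2 + j * ‖a.2 - b.2‖ ^ 2 ≤ R ∧ c ≤ rhsDefect G g K σ a b y e := by
  obtain ⟨ε, hε, η, hη, T', hT', m, hp₀D, hm, hpen⟩ :=
    exists_parabolicPenalty hΩo hΩb huv hM hbdry hp₀ hlt
  have hT : 0 < T := hp₀.1.1.trans hp₀.1.2
  have hD : Icc 0 T' ×ˢ closure Ω ⊆ Ico 0 T ×ˢ closure Ω :=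
    prod_mono_left (Icc_subset_Ico_right hT')
  have hI : Ioo 0 T' ×ˢ Ω ⊆ Ioo 0 T ×ˢ Ω := prod_mono_left (Ioo_subset_Ioo_right hT'.le)
  obtain ⟨P, hPI, hP, R, ρ, hρ, hjets⟩ := exists_isCompact_forall_exists_superjets
    (isCompact_Icc.prod hΩb.isCompact_closure) (isOpen_Ioo.prod hΩo)
    (Set.prod_mono Ioo_subset_Icc_self subset_closure)
    (upperSemicontinuousOn_add_parabolicPenalty ε η (husc.mono hD) fun p hp => (hD hp).1.2)
    (hvlsc.mono hD).neg hp₀D hm fun p hp => (hpen p hp).2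
  set σ := η / T ^ 2 / 2
  have hσ : 0 < σ := by positivity
  have hδ : 0 < 1 - Real.exp (-σ) := sub_pos.mpr (Real.exp_lt_one_iff.mpr (neg_neg_of_pos hσ))
  set K₀ := max 1 (R / ρ ^ 2)
  have hK₀ : 0 < K₀ := lt_max_of_lt_left one_pos
  have hRK₀ : R ≤ K₀ * ρ ^ 2 := (div_le_iff₀ (by positivity)).mp (le_max_right _ _)
  refine ⟨σ, hσ, _, mul_pos hδ (hf.const_pos hΓ (div_pos (half_pos hε) hδ)), P,
    hPI.trans (prod_mono hI hI), hP, R, K₀, hK₀, fun K hK j hj r hr => ?_⟩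
  obtain ⟨e, he, a, b, hab, hBR, hbR, hle, A, hjet_u, hjet_v⟩ := hjets (spacetimeForm n K j)
    (isPosDefForm_spacetimeForm (hK₀.trans_le hK) (hK₀.trans_le hj))
    (fun x => norm_le_of_spacetimeForm_self_le hK₀ hK hj hρ.le hRK₀) r hr
  obtain ⟨ha', hb'⟩ := hPI hab
  have ha := hI ha'
  have huv_le : v b ≤ u a := by
    have hpen_a := (hpen a ⟨Ioo_subset_Icc_self ha'.1, subset_closure ha'.2⟩).1
    simp only [Pi.add_apply, Pi.neg_apply] at hle
    linarith
  refine ⟨a, b, v b, e.1, hab, (norm_fst_le e).trans_lt he, by simpa using hbR, ?_,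
    le_rhsDefect hΓ hf hsub hsup ha (hI hb') ha.1.1.le ha.1.2 (hg₀ _ ha.2) (hGm a ha huv_le) hε
      hη.le hσ (mul_div_cancel₀ _ two_ne_zero).le hjet_u hjet_v⟩
  have hz := mul_le_mul_of_nonneg_left (sq_norm_le_euclideanForm (a.2 - b.2)) (hK₀.le.trans hj)
  rw [spacetimeForm_apply, Prod.fst_sub, Prod.snd_sub, ← sq] at hBR
  linarith

/-- The spatial parameter `j` goes to infinity before the temporal one `K` is chosen: the
exponential factors stay bounded for fixed `K`, and in the limit both points share the value of
`g`. -/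
theorem sub_le_of_sub_le_on_parabolicBoundary (hΓ : IsGammaCone n Γ) (hf : IsHessianDensity n Γ f)
    (hΩo : IsOpen Ω) (hΩb : Bornology.IsBounded Ω)
    (hGc : ContinuousOn (fun p : (ℝ × (Fin n → ℂ)) × ℝ => G p.1.1 p.1.2 p.2)
      ((Ioo 0 T ×ˢ Ω) ×ˢ univ))
    (hGm : ∀ p ∈ Ioo 0 T ×ˢ Ω, Monotone (G p.1 p.2))
    (hgc : ContinuousOn g Ω) (hg₀ : ∀ z ∈ Ω, 0 ≤ g z)
    (husc : UpperSemicontinuousOn u (Ico 0 T ×ˢ closure Ω))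
    (hvlsc : LowerSemicontinuousOn v (Ico 0 T ×ˢ closure Ω))
    (huv : ∃ C, ∀ p ∈ Ico 0 T ×ˢ closure Ω, u p - v p ≤ C)
    (hsub : ParSubsolOn f Γ G g (Ioo 0 T ×ˢ Ω) u) (hsup : ParSupersolOn f Γ G g (Ioo 0 T ×ˢ Ω) v)
    (hM : 0 ≤ M) (hbdry : ∀ p ∈ parabolicBoundary Ω T, u p - v p ≤ M) :
    ∀ p ∈ Ioo 0 T ×ˢ Ω, u p - v p ≤ M := by
  intro p₀ hp₀
  by_contra! hlt
  obtain ⟨σ, hσ, c, hc, P, hPI, hP, R, K₀, hK₀, hpoints⟩ := exists_pos_forall_exists_le_rhsDefect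
    hΓ hf hΩo hΩb hGm hg₀ husc hvlsc huv hsub hsup hM hbdry hp₀ hlt
  have hgc' : ContinuousOn (fun p : ℝ × (Fin n → ℂ) => g p.2) (Ioo 0 T ×ˢ Ω) :=
    hgc.comp continuousOn_snd fun p hp => hp.2
  obtain ⟨K, hK, hnonpos⟩ := ((eventually_ge_atTop K₀).and
    (eventually_rhsDefect_zero_nonpos hP hPI hGc (fun p hp => hg₀ p.2 hp.2) hσ R)).exists
  obtain ⟨a, b, y, hab, hy, hspace, htime, hle⟩ := exists_le_rhsDefect_zero_of_forall_ge hP hPI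
    hGc hgc' (hK₀.le.trans hK) hK₀ (hpoints K hK)
  exact (hc.trans_le hle).not_ge (hnonpos a b y hab hy hspace htime)

end Comparison

theorem stmt15_general
    {n : ℕ} (Γ : Set (Fin n → ℝ)) (f : (Fin n → ℝ) → ℝ)
    (hΓ : IsGammaCone n Γ) (hf : IsHessianDensity n Γ f)
    (Ω : Set (Fin n → ℂ)) (hΩo : IsOpen Ω) (hΩb : Bornology.IsBounded Ω) (T : ℝ)
    (G : ℝ → (Fin n → ℂ) → ℝ → ℝ)
    (hGc : ContinuousOn (fun p : ℝ × (Fin n → ℂ) × ℝ => G p.1 p.2.1 p.2.2)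
      (Ioo 0 T ×ˢ Ω ×ˢ univ))
    (hGm : ∀ t ∈ Ioo 0 T, ∀ z ∈ Ω, Monotone (G t z))
    (g : (Fin n → ℂ) → ℝ) (hgc : ContinuousOn g Ω) (hg₀ : ∀ z ∈ Ω, 0 ≤ g z)
    (u v : ℝ × (Fin n → ℂ) → ℝ)
    (husc : UpperSemicontinuousOn u (Ico 0 T ×ˢ closure Ω))
    (hvlsc : LowerSemicontinuousOn v (Ico 0 T ×ˢ closure Ω))
    (huv : ∃ C, ∀ p ∈ Ico 0 T ×ˢ closure Ω, u p - v p ≤ C)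
    (hsub : ParSubsolOn f Γ G g (Ioo 0 T ×ˢ Ω) u)
    (hsup : ParSupersolOn f Γ G g (Ioo 0 T ×ˢ Ω) v) :
    ∀ p ∈ Ioo 0 T ×ˢ Ω,
      u p - v p ≤ sSup ((fun q => max (u q - v q) 0) '' parabolicBoundary Ω T) := by
  intro p hp
  have hbdd : BddAbove ((fun q => max (u q - v q) 0) '' parabolicBoundary Ω T) := by
    obtain ⟨C, hC⟩ := huv
    refine ⟨max C 0, forall_mem_image.mpr fun q hq => max_le_max_right 0 (hC q ?_)⟩
    exact parabolicBoundary_subset (hp.1.1.trans hp.1.2) hq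
  refine sub_le_of_sub_le_on_parabolicBoundary hΓ hf hΩo hΩb ?_ (fun q hq => hGm _ hq.1 _ hq.2) hgc
    hg₀ husc hvlsc huv hsub hsup
    (Real.sSup_nonneg (forall_mem_image.mpr fun q _ => le_max_right _ 0))
    (fun q hq => (le_max_left _ 0).trans (le_csSup hbdd (mem_image_of_mem _ hq))) p hp
  exact hGc.comp (f := fun q : (ℝ × (Fin n → ℂ)) × ℝ => (q.1.1, q.1.2, q.2)) (by fun_prop)
    fun q hq => ⟨hq.1.1, hq.1.2, mem_univ _⟩

/-- the comparison principle. -/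
theorem stmt15
    {n : ℕ} (hn : 1 ≤ n) (Γ : Set (Fin n → ℝ)) (f : (Fin n → ℝ) → ℝ)
    (hΓ : IsGammaCone n Γ) (hf : IsHessianDensity n Γ f)
    (Ω : Set (Fin n → ℂ)) (hΩo : IsOpen Ω) (hΩb : Bornology.IsBounded Ω)
    (hΩc : IsConnected Ω) (T : ℝ) (hT : 0 < T)
    (G : ℝ → (Fin n → ℂ) → ℝ → ℝ)
    (hGc : ContinuousOn (fun p : ℝ × (Fin n → ℂ) × ℝ => G p.1 p.2.1 p.2.2)
      (Set.Icc 0 T ×ˢ closure Ω ×ˢ Set.univ))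
    (hGm : ∀ t z, Monotone (fun r => G t z r))
    (g : (Fin n → ℂ) → ℝ) (hgc : ContinuousOn g Ω)
    (hg0 : ∀ z ∈ Ω, 0 ≤ g z) (hgb : ∃ C, ∀ z ∈ Ω, g z ≤ C)
    (hflim : Filter.Tendsto (fun R : ℝ => f (fun _ => R)) Filter.atTop Filter.atTop)
    (u v : ℝ × (Fin n → ℂ) → ℝ)
    (husc : UpperSemicontinuousOn u (Set.Ico 0 T ×ˢ closure Ω))
    (hub : ∃ C, ∀ p ∈ Set.Ico 0 T ×ˢ closure Ω, |u p| ≤ C)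
    (hvlsc : LowerSemicontinuousOn v (Set.Ico 0 T ×ˢ closure Ω))
    (hvb : ∃ C, ∀ p ∈ Set.Ico 0 T ×ˢ closure Ω, |v p| ≤ C)
    (hsub : ParSubsolOn f Γ G g (Set.Ioo 0 T ×ˢ Ω) u)
    (hsup : ParSupersolOn f Γ G g (Set.Ioo 0 T ×ˢ Ω) v) :
    ∀ p ∈ Set.Ioo 0 T ×ˢ Ω,
      u p - v p ≤ sSup ((fun q => max (u q - v q) 0) ''
        ((({0} : Set ℝ) ×ˢ closure Ω) ∪ (Set.Ioo 0 T ×ˢ frontier Ω))) := by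
  obtain ⟨Cu, hCu⟩ := hub
  obtain ⟨Cv, hCv⟩ := hvb
  exact stmt15_general Γ f hΓ hf Ω hΩo hΩb T G
    (hGc.mono (Set.prod_mono Ioo_subset_Icc_self (prod_mono_left subset_closure)))
    (fun t _ z _ => hGm t z) g hgc hg0 u v husc hvlsc
    ⟨Cu + Cv, fun p hp => by linarith [(abs_le.mp (hCu p hp)).2, (abs_le.mp (hCv p hp)).1]⟩
    hsub hsup
end

section
/- Assume Ω is a bounded smooth domain and the pair (u₀, g) is admissible. Then for every ε > 0, there exists a continuous ε-superbarrier for the Cauchy–Dirichlet problem which is Lipschitz in t. -/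
open Filter Topology Set

/-!
A minimum of two supersolutions is a supersolution, and at a point the larger one need not be a
supersolution at all; the barrier is `min a b`, with `a` responsible for the interior and the
initial time and `b` for the lateral boundary.

Admissibility provides `u` close to `u₀` with `F(Hu) ≤ e^K g`, so `a(t, z) = u(z) + ε/2 + C t` is a
supersolution once `C` is large, and `C` may be enlarged until `a ≥ φ` on the lateral boundary. For
`b`, take a smooth `ψ` slightly above `φ` there and put `b = ψ + A w`, where `w = 1 - e^{K ρ}` is
positive in `Ω`, vanishes on `∂Ω` and has negative Laplacian on `∂Ω`. As `Γ ⊆ Γ₁`, no lower test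
function can have eigenvalues in `cl(Γ)` where the spatial Laplacian of `b` is negative, so `b` is
trivially a supersolution there. By compactness, a large `A` makes every point either one of these
or one where `a < b`.
-/

section Compactness

variable {X : Type*}

theorem eventually_lt_mul_of_tendsto_pos {l : Filter X} {F w : X → ℝ} {a c : ℝ}
    (hF : Tendsto F l (𝓝 a)) (hw : Tendsto w l (𝓝 c)) (hc : 0 < c) :
    ∀ᶠ p in l ×ˢ (atTop : Filter ℝ), F p.1 < p.2 * w p.1 := by
  have hmul : Tendsto (fun p : X × ℝ => p.2 * w p.1) (l ×ˢ atTop) atTop :=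
    tendsto_snd.atTop_mul_pos hc (hw.comp tendsto_fst)
  filter_upwards [(hF.comp tendsto_fst).eventually_lt_const (lt_add_one a),
    hmul.eventually_gt_atTop (a + 1)] with p hFp hwp using lt_trans hFp hwp

variable [TopologicalSpace X] {K : Set X}

theorem eventually_forall_mem_of_isCompact {Y : Type*} (hK : IsCompact K) {l : Filter Y}
    {P : X → Y → Prop} (h : ∀ x ∈ K, ∀ᶠ p in 𝓝[K] x ×ˢ l, P p.1 p.2) :
    ∀ᶠ y in l, ∀ x ∈ K, P x y := by
  refine hK.induction_on (p := fun s => ∀ᶠ y in l, ∀ x ∈ s, P x y) (by simp)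
    (fun _ _ hst ht => ht.mono fun y hy x hx => hy x (hst hx)) (fun _ _ hs ht => ?_)
    fun x hx => ?_
  · filter_upwards [hs, ht] with y hys hyt x hx using hx.elim (hys x) (hyt x)
  · obtain ⟨p, hp, q, hq, hpq⟩ := eventually_prod_iff.mp (h x hx)
    exact ⟨{x | p x}, hp, hq.mono fun y hy x hx => hpq hx hy⟩

theorem eventually_forall_lt_mul_or_lt_mul (hK : IsCompact K) {F₁ F₂ w₁ w₂ : X → ℝ}
    (hF₁ : ContinuousOn F₁ K) (hw₁ : ContinuousOn w₁ K)
    (hF₂ : ContinuousOn F₂ K) (hw₂ : ContinuousOn w₂ K) (h : ∀ x ∈ K, 0 < w₁ x ∨ 0 < w₂ x) :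
    ∀ᶠ C in (atTop : Filter ℝ), ∀ x ∈ K, F₁ x < C * w₁ x ∨ F₂ x < C * w₂ x := by
  refine eventually_forall_mem_of_isCompact hK fun x hx => ?_
  rcases h x hx with h₁ | h₂
  · exact (eventually_lt_mul_of_tendsto_pos (hF₁ x hx) (hw₁ x hx) h₁).mono fun _ => Or.inl
  · exact (eventually_lt_mul_of_tendsto_pos (hF₂ x hx) (hw₂ x hx) h₂).mono fun _ => Or.inr

theorem eventually_forall_lt_mul (hK : IsCompact K) {F w : X → ℝ} (hF : ContinuousOn F K)
    (hw : ContinuousOn w K) (hw0 : ∀ x ∈ K, 0 ≤ w x) (h : ∀ x ∈ K, w x = 0 → F x < 0) :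
    ∀ᶠ C in (atTop : Filter ℝ), ∀ x ∈ K, F x < C * w x := by
  refine eventually_forall_mem_of_isCompact hK fun x hx => ?_
  rcases (hw0 x hx).eq_or_lt with hzero | hpos
  · have hneg : ∀ᶠ y in 𝓝[K] x, F y < 0 := (hF x hx).eventually_lt_const (h x hx hzero.symm)
    filter_upwards [(hneg.and self_mem_nhdsWithin).prod_mk (eventually_ge_atTop (0 : ℝ))]
      with p hp using hp.1.1.trans_le (mul_nonneg hp.2 (hw0 p.1 hp.1.2))
  · exact eventually_lt_mul_of_tendsto_pos (hF x hx) (hw x hx) hpos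

end Compactness

theorem exists_contDiff_lt_lt_add {E : Type*} [NormedAddCommGroup E] [NormedSpace ℝ E]
    [FiniteDimensional ℝ E] {S : Set E} (hS : IsCompact S) {F : E → ℝ} (hF : ContinuousOn F S)
    {ε : ℝ} (hε : 0 < ε) :
    ∃ ψ : E → ℝ, ContDiff ℝ (⊤ : ℕ∞) ψ ∧ ∀ x ∈ S, F x < ψ x ∧ ψ x < F x + ε := by
  obtain ⟨Φ, hΦ⟩ := ContinuousMap.exists_restrict_eq hS.isClosed
    ⟨fun x : S => F x + ε / 2, hF.domRestrict.add continuous_const⟩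
  have hΦF : ∀ x ∈ S, Φ x = F x + ε / 2 := fun x hx => DFunLike.congr_fun hΦ ⟨x, hx⟩
  obtain ⟨ψ, hψ, hdist⟩ := (mem_closure_iff_nhds_basis
    (nhds_basis_uniformity Metric.uniformity_basis_dist.compactConvergenceUniformity)).mp
      (ContinuousMap.dense_setOfPred_contDiff Φ) (S, ε / 2) ⟨hS, half_pos hε⟩
  refine ⟨ψ, hψ, fun x hx => ?_⟩
  have hnear : |ψ x - Φ x| < ε / 2 := hdist x hx
  rw [hΦF x hx, abs_lt] at hnear
  constructor <;> linarith [hnear.1, hnear.2]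

section SecondDerivative

variable {E : Type*} [NormedAddCommGroup E] [NormedSpace ℝ E] {u : E → ℝ} {x : E}

theorem deriv_deriv_nonneg_of_isLocalMin {r : ℝ → ℝ} {a : ℝ} (hmin : IsLocalMin r a)
    (hr : ContinuousAt r a) : 0 ≤ deriv (deriv r) a := by
  by_contra! hneg
  have hmax : IsLocalMax r a := isLocalMax_of_deriv_deriv_neg hneg hmin.deriv_eq_zero hr
  have hconst : r =ᶠ[𝓝 a] fun _ => r a := by
    filter_upwards [hmax, hmin] with s hle hge using le_antisymm hle hge
  have hderiv : deriv r =ᶠ[𝓝 a] fun _ => 0 := hconst.deriv.trans (by simp)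
  exact hneg.ne (hderiv.deriv_eq.trans (by simp))

theorem iteratedFDeriv_two_eq_deriv_deriv (hu : ContDiffAt ℝ 2 u x) (e : E) :
    iteratedFDeriv ℝ 2 u x ![e, e] = deriv (deriv fun s : ℝ => u (x + s • e)) 0 := by
  have hline (s : ℝ) : HasDerivAt (fun s : ℝ => x + s • e) e s := by
    simpa using ((hasDerivAt_id s).smul_const e).const_add x
  have hx : x + (0 : ℝ) • e = x := by simp
  have hdiff : ∀ᶠ y in 𝓝 (x + (0 : ℝ) • e), DifferentiableAt ℝ u y := by
    rw [hx]
    exact (hu.eventually (by simp)).mono fun y hy => hy.differentiableAt two_ne_zero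
  have hfirst : (deriv fun s : ℝ => u (x + s • e)) =ᶠ[𝓝 0] fun s => fderiv ℝ u (x + s • e) e := by
    filter_upwards [(hline 0).continuousAt.eventually hdiff] with s hs
      using (hs.hasFDerivAt.comp_hasDerivAt s (hline s)).deriv
  have hsecond : HasFDerivAt (fderiv ℝ u) (fderiv ℝ (fderiv ℝ u) x) (x + (0 : ℝ) • e) := by
    rw [hx]
    exact ((hu.fderiv_right (m := 1) le_rfl).differentiableAt one_ne_zero).hasFDerivAt
  rw [hfirst.deriv_eq, iteratedFDeriv_two_apply]
  exact ((((ContinuousLinearMap.apply ℝ ℝ e).hasFDerivAt.comp _ hsecond).comp_hasDerivAt 0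
    (hline 0)).deriv).symm

theorem iteratedFDeriv_two_nonneg_of_isLocalMin (hu : ContDiffAt ℝ 2 u x) (hmin : IsLocalMin u x)
    (e : E) : 0 ≤ iteratedFDeriv ℝ 2 u x ![e, e] := by
  have hline : Tendsto (fun s : ℝ => x + s • e) (𝓝 0) (𝓝 x) :=
    Continuous.tendsto' (by fun_prop) _ _ (by simp)
  have hx : x + (0 : ℝ) • e = x := by simp
  rw [iteratedFDeriv_two_eq_deriv_deriv hu]
  refine deriv_deriv_nonneg_of_isLocalMin ?_ ?_
  · simpa only [IsLocalMin, IsMinFilter, hx] using hline.eventually hmin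
  · simpa only [ContinuousAt, hx, Function.comp_def] using hu.continuousAt.tendsto.comp hline

theorem iteratedFDeriv_two_comp {h : ℝ → ℝ} (hh : ContDiff ℝ 2 h) (hu : ContDiff ℝ 2 u) (e : E) :
    iteratedFDeriv ℝ 2 (fun y => h (u y)) x ![e, e] =
      deriv (deriv h) (u x) * fderiv ℝ u x e ^ 2
        + deriv h (u x) * iteratedFDeriv ℝ 2 u x ![e, e] := by
  have hfirst : fderiv ℝ (fun y => h (u y)) = fun y => deriv h (u y) • fderiv ℝ u y := by
    ext1 y
    exact ((hh.differentiable two_ne_zero _).hasDerivAt.comp_hasFDerivAt y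
      (hu.differentiable two_ne_zero y).hasFDerivAt).fderiv
  have hh' : HasDerivAt (deriv h) (deriv (deriv h) (u x)) (u x) :=
    (((hh.of_le le_rfl : ContDiff ℝ (1 + 1) h).deriv').differentiable one_ne_zero _).hasDerivAt
  have hu' : HasFDerivAt (fderiv ℝ u) (fderiv ℝ (fderiv ℝ u) x) x :=
    ((hu.fderiv_right (m := 1) le_rfl).differentiable one_ne_zero x).hasFDerivAt
  have hsecond :=
    (hh'.comp_hasFDerivAt x (hu.differentiable two_ne_zero x).hasFDerivAt).fun_smul hu'
  simp only [Function.comp_def] at hsecond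
  simp only [iteratedFDeriv_two_apply, hfirst, hsecond.fderiv]
  simp only [Matrix.cons_val_zero, add_apply, smul_apply,
    ContinuousLinearMap.smulRight_apply, smul_eq_mul, Matrix.cons_val_one, Matrix.cons_val_fin_one]
  ring

end SecondDerivative

section Laplacian

variable {ι E : Type*} [Fintype ι] [NormedAddCommGroup E] [NormedSpace ℝ E]
  {e : ι → E} {u v : E → ℝ} {x : E}

/-- The Laplace-type operator `∑ᵢ D²u(x)(eᵢ, eᵢ)` attached to a finite family of directions; for an
orthonormal basis it is the Laplacian, but no metric structure is assumed. -/
noncomputable def laplacianAlong (e : ι → E) (u : E → ℝ) (x : E) : ℝ :=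
  ∑ i, iteratedFDeriv ℝ 2 u x ![e i, e i]

/-- The squared gradient `∑ᵢ (Du(x) eᵢ)²` along a finite family of directions, which is the
first-order term of `laplacianAlong e (h ∘ u)`. -/
noncomputable def gradSqAlong (e : ι → E) (u : E → ℝ) (x : E) : ℝ :=
  ∑ i, fderiv ℝ u x (e i) ^ 2

theorem laplacianAlong_add (hu : ContDiffAt ℝ 2 u x) (hv : ContDiffAt ℝ 2 v x) :
    laplacianAlong e (fun y => u y + v y) x = laplacianAlong e u x + laplacianAlong e v x := by
  simp only [laplacianAlong, fun_iteratedFDeriv_add_apply hu hv, add_apply,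
    Finset.sum_add_distrib]

theorem laplacianAlong_const_mul (c : ℝ) (hu : ContDiffAt ℝ 2 u x) :
    laplacianAlong e (fun y => c * u y) x = c * laplacianAlong e u x := by
  simp only [laplacianAlong, ← smul_eq_mul, iteratedFDeriv_const_smul_apply' hu,
    smul_apply, Finset.smul_sum]

theorem laplacianAlong_comp {h : ℝ → ℝ} (hh : ContDiff ℝ 2 h) (hu : ContDiff ℝ 2 u) :
    laplacianAlong e (fun y => h (u y)) x =
      deriv (deriv h) (u x) * gradSqAlong e u x + deriv h (u x) * laplacianAlong e u x := by
  simp only [laplacianAlong, gradSqAlong, iteratedFDeriv_two_comp hh hu, Finset.sum_add_distrib,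
    Finset.mul_sum]

theorem laplacianAlong_le_of_eventually_le (hu : ContDiffAt ℝ 2 u x) (hv : ContDiffAt ℝ 2 v x)
    (hx : u x = v x) (hle : ∀ᶠ y in 𝓝 x, u y ≤ v y) :
    laplacianAlong e u x ≤ laplacianAlong e v x := by
  have hmin : IsLocalMin (v - u) x := by
    filter_upwards [hle] with y hy
    simpa [hx] using hy
  refine Finset.sum_le_sum fun i _ => sub_nonneg.mp ?_
  have hnonneg : 0 ≤ iteratedFDeriv ℝ 2 (v - u) x ![e i, e i] :=
    iteratedFDeriv_two_nonneg_of_isLocalMin (hv.sub hu) hmin (e i)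
  rwa [iteratedFDeriv_sub_apply hv hu] at hnonneg

theorem continuous_laplacianAlong (hu : ContDiff ℝ 2 u) :
    Continuous (laplacianAlong e u) :=
  continuous_finsetSum _ fun i _ =>
    (ContinuousMultilinearMap.apply ℝ (fun _ : Fin 2 => E) ℝ ![e i, e i]).continuous.comp
      (hu.continuous_iteratedFDeriv le_rfl)

theorem continuous_gradSqAlong (hu : ContDiff ℝ 2 u) :
    Continuous (gradSqAlong e u) := by
  have hcont := hu.continuous_fderiv two_ne_zero
  unfold gradSqAlong
  fun_prop

theorem gradSqAlong_nonneg : 0 ≤ gradSqAlong e u x :=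
  Finset.sum_nonneg fun _ _ => sq_nonneg _

theorem gradSqAlong_pos (b : Module.Basis ι ℝ E) (hu : fderiv ℝ u x ≠ 0) :
    0 < gradSqAlong b u x := by
  refine gradSqAlong_nonneg.lt_of_ne' fun hzero => hu ?_
  have hcoord (i : ι) : fderiv ℝ u x (b i) ^ 2 = 0 :=
    (Finset.sum_eq_zero_iff_of_nonneg fun _ _ => sq_nonneg _).mp hzero i (Finset.mem_univ i)
  exact ContinuousLinearMap.coe_injective
    (b.ext fun i => by simpa using pow_eq_zero_iff two_ne_zero |>.mp (hcoord i))

theorem laplacianAlong_slice {ψ : ℝ × E → ℝ} (hψ : ContDiff ℝ 2 ψ) (p : ℝ × E) :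
    laplacianAlong e (fun y => ψ (p.1, y)) p.2 =
      laplacianAlong (fun i => ((0 : ℝ), e i)) ψ p := by
  simp only [laplacianAlong]
  refine Finset.sum_congr rfl fun i _ => ?_
  have hline : ContDiff ℝ 2 fun y => ψ (p.1, y) := hψ.comp (contDiff_prodMk_right p.1)
  rw [iteratedFDeriv_two_eq_deriv_deriv hline.contDiffAt,
    iteratedFDeriv_two_eq_deriv_deriv hψ.contDiffAt]
  congr! 4 with s
  simp [Prod.ext_iff]

end Laplacian

section ComplexHessian

variable {n : ℕ}

/-- The real basis of `ℂⁿ` formed by the vectors `eⱼ` and `i eⱼ`. -/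
noncomputable def realBasis (n : ℕ) : Module.Basis (Σ _ : Fin n, Fin 2) ℝ (Fin n → ℂ) :=
  Pi.basis fun _ => Complex.basisOneI

theorem complexHessian_trace_re (u : (Fin n → ℂ) → ℝ) (z : Fin n → ℂ) :
    (complexHessian u z).trace.re = laplacianAlong (realBasis n) u z / 4 := by
  simp only [laplacianAlong, Fintype.sum_sigma, Fin.sum_univ_two, realBasis, Pi.basis_apply,
    Complex.coe_basisOneI, Matrix.cons_val_zero, Matrix.cons_val_one, Finset.sum_div,
    Matrix.trace, Matrix.diag, complexHessian, Complex.re_sum]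
  refine Finset.sum_congr rfl fun j _ => ?_
  rw [Complex.add_re, Complex.ofReal_re, Complex.re_mul_ofReal, Complex.I_re, zero_mul, add_zero]

theorem complexHessian_add_const (u : (Fin n → ℂ) → ℝ) (c : ℝ) (z : Fin n → ℂ) :
    complexHessian (fun y => u y + c) z = complexHessian u z := by
  have hfirst : fderiv ℝ (fun y => u y + c) = fderiv ℝ u := funext fun _ => fderiv_add_const c
  ext j k
  simp only [complexHessian, iteratedFDeriv_two_apply, hfirst]

theorem sum_nonneg_of_mem_closure {Γ : Set (Fin n → ℝ)} (hΓ : Γ ⊆ GammaK n 1) {x : Fin n → ℝ}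
    (hx : x ∈ closure Γ) : 0 ≤ ∑ i, x i := by
  refine closure_minimal (t := {x | 0 ≤ ∑ i, x i}) (fun y hy => ?_)
    (isClosed_le continuous_const (by fun_prop)) hx
  have hpos : 0 < esym n 1 y := hΓ hy 1 le_rfl le_rfl
  simpa [esym, Finset.powersetCard_one] using hpos.le

theorem Fop_eq_bot_of_laplacianAlong_neg {Γ : Set (Fin n → ℝ)} (hΓ : Γ ⊆ GammaK n 1)
    (f : (Fin n → ℝ) → ℝ) {u : (Fin n → ℂ) → ℝ} {z : Fin n → ℂ}
    (hu : laplacianAlong (realBasis n) u z < 0) : Fop f Γ (complexHessian u z) = ⊥ := by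
  unfold Fop
  split_ifs with hherm hmem
  · have htrace : ∑ i, hherm.eigenvalues i = laplacianAlong (realBasis n) u z / 4 := by
      rw [← complexHessian_trace_re, hherm.trace_eq_sum_eigenvalues]
      simp
    linarith [sum_nonneg_of_mem_closure hΓ hmem]
  · rfl
  · rfl

end ComplexHessian

section Viscosity

variable {n : ℕ} {f : (Fin n → ℝ) → ℝ} {Γ : Set (Fin n → ℝ)} {G : ℝ → (Fin n → ℂ) → ℝ → ℝ}
  {g : (Fin n → ℂ) → ℝ} {v w q : ℝ × (Fin n → ℂ) → ℝ} {p₀ : ℝ × (Fin n → ℂ)}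

theorem IsLowerTestAt.mono (hq : IsLowerTestAt v q p₀) (heq : v p₀ = w p₀)
    (hle : ∀ᶠ p in 𝓝 p₀, v p ≤ w p) : IsLowerTestAt w q p₀ :=
  ⟨hq.1.trans heq, by filter_upwards [hq.2.1, hle] with p hqv hvw using hqv.trans hvw, hq.2.2⟩

theorem IsLowerTestAt.slice (hq : IsLowerTestAt v q p₀) :
    IsLowerTestAtE (fun z => v (p₀.1, z)) (fun z => q (p₀.1, z)) p₀.2 :=
  ⟨hq.1, (Continuous.prodMk_right p₀.1).continuousAt.eventually hq.2.1, hq.2.2.self_of_nhds.2⟩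

theorem IsLowerTestAt.deriv_eq (hq : IsLowerTestAt v q p₀) {d : ℝ}
    (hv : HasDerivAt (fun t => v (t, p₀.2)) d p₀.1) : deriv (fun t => q (t, p₀.2)) p₀.1 = d := by
  have hmin : IsLocalMin (fun t => v (t, p₀.2) - q (t, p₀.2)) p₀.1 := by
    filter_upwards [(Continuous.prodMk_left p₀.2).continuousAt.eventually hq.2.1] with t ht
    simpa [hq.1] using ht
  linarith [hmin.hasDerivAt_eq_zero (hv.sub hq.2.2.self_of_nhds.1.hasDerivAt)]

theorem IsLowerTestAtE.add_const {u q : (Fin n → ℂ) → ℝ} {z₀ : Fin n → ℂ}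
    (hq : IsLowerTestAtE u q z₀) (c : ℝ) :
    IsLowerTestAtE (fun z => u z + c) (fun z => q z + c) z₀ :=
  ⟨congrArg (· + c) hq.1, hq.2.1.mono fun _ hz => add_le_add_left hz c,
    hq.2.2.add contDiffAt_const⟩

/-- The pointwise form of `ParSupersolOn`: the viscosity supersolution inequality is tested at `p₀`
only, and no semicontinuity is imposed. -/
def ParSupersolAt (f : (Fin n → ℝ) → ℝ) (Γ : Set (Fin n → ℝ)) (G : ℝ → (Fin n → ℂ) → ℝ → ℝ)
    (g : (Fin n → ℂ) → ℝ) (v : ℝ × (Fin n → ℂ) → ℝ) (p₀ : ℝ × (Fin n → ℂ)) : Prop :=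
  ∀ q, IsLowerTestAt v q p₀ →
    Fop f Γ (complexHessian (fun z => q (p₀.1, z)) p₀.2) ≤
      ((Real.exp (deriv (fun t => q (t, p₀.2)) p₀.1 + G p₀.1 p₀.2 (q p₀)) * g p₀.2 : ℝ) : EReal)

theorem ParSupersolAt.of_touching (hw : ParSupersolAt f Γ G g w p₀) (heq : v p₀ = w p₀)
    (hle : ∀ p, v p ≤ w p) : ParSupersolAt f Γ G g v p₀ :=
  fun q hq => hw q (hq.mono heq (.of_forall hle))

protected theorem ParSupersolAt.min (hv : ParSupersolAt f Γ G g v p₀)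
    (hw : v p₀ < w p₀ ∨ ParSupersolAt f Γ G g w p₀) :
    ParSupersolAt f Γ G g (fun p => min (v p) (w p)) p₀ := by
  rcases le_total (v p₀) (w p₀) with hle | hle
  · exact hv.of_touching (min_eq_left hle) fun _ => min_le_left _ _
  · exact (hw.resolve_left hle.not_gt).of_touching (min_eq_right hle) fun _ => min_le_right _ _

theorem parSupersolAt_add_mul_time {u : (Fin n → ℂ) → ℝ} {K c C : ℝ}
    (hu : ∀ q, IsLowerTestAtE u q p₀.2 →
      Fop f Γ (complexHessian q p₀.2) ≤ ((Real.exp K * g p₀.2 : ℝ) : EReal))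
    (hg : 0 ≤ g p₀.2) (hK : K ≤ C + G p₀.1 p₀.2 (u p₀.2 + (c + C * p₀.1))) :
    ParSupersolAt f Γ G g (fun p => u p.2 + (c + C * p.1)) p₀ := by
  intro q hq
  have htime : deriv (fun t => q (t, p₀.2)) p₀.1 = C := by
    refine hq.deriv_eq ?_
    simpa using (((hasDerivAt_id p₀.1).const_mul C).const_add c).const_add (u p₀.2)
  have htest : IsLowerTestAtE u (fun z => q (p₀.1, z) + -(c + C * p₀.1)) p₀.2 := by
    simpa only [add_neg_cancel_right] using hq.slice.add_const (-(c + C * p₀.1))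
  have hspace := hu _ htest
  rw [complexHessian_add_const] at hspace
  refine hspace.trans (EReal.coe_le_coe_iff.mpr ?_)
  rw [htime, hq.1]
  gcongr

theorem parSupersolAt_of_laplacianAlong_neg (hΓ : Γ ⊆ GammaK n 1)
    (hv : ContDiffAt ℝ 2 (fun z => v (p₀.1, z)) p₀.2)
    (hneg : laplacianAlong (realBasis n) (fun z => v (p₀.1, z)) p₀.2 < 0) :
    ParSupersolAt f Γ G g v p₀ := by
  intro q hq
  obtain ⟨heq, hle, hreg⟩ := hq.slice
  rw [Fop_eq_bot_of_laplacianAlong_neg hΓ f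
    ((laplacianAlong_le_of_eventually_le hreg hv heq hle).trans_lt hneg)]
  exact bot_le

end Viscosity

theorem uscEnvOn_eq_of_continuousWithinAt {X : Type*} [TopologicalSpace X] {D : Set X} {v : X → ℝ}
    {x : X} (hv : ContinuousWithinAt v D x) (hx : x ∈ D) : uscEnvOn D v x = v x :=
  haveI : (𝓝[D] x).NeBot := mem_closure_iff_nhdsWithin_neBot.mp (subset_closure hx)
  hv.tendsto.limsup_eq

section Barrier

variable {n : ℕ} {Ω : Set (Fin n → ℂ)} {T : ℝ}

theorem superBarrier_of_continuousOn {f : (Fin n → ℝ) → ℝ} {Γ : Set (Fin n → ℝ)}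
    {G : ℝ → (Fin n → ℂ) → ℝ → ℝ} {g : (Fin n → ℂ) → ℝ} {φ : ℝ → (Fin n → ℂ) → ℝ}
    {u₀ : (Fin n → ℂ) → ℝ} {ε : ℝ} {v : ℝ × (Fin n → ℂ) → ℝ} (hT : 0 < T)
    (hv : ContinuousOn v (Ico 0 T ×ˢ closure Ω))
    (hsuper : ∀ p ∈ Ioo 0 T ×ˢ Ω, ParSupersolAt f Γ G g v p)
    (hinit : ∀ z ∈ closure Ω, u₀ z ≤ v (0, z) ∧ v (0, z) ≤ u₀ z + ε)
    (hlat : ∀ t ∈ Ico 0 T, ∀ z ∈ frontier Ω, φ t z ≤ v (t, z) ∧ v (t, z) ≤ φ t z + ε) :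
    SuperBarrier f Γ G g Ω T φ u₀ ε v := by
  have henv : ∀ p ∈ Ico 0 T ×ˢ closure Ω, uscEnvOn (Ico 0 T ×ˢ closure Ω) v p = v p :=
    fun p hp => uscEnvOn_eq_of_continuousWithinAt (hv p hp) hp
  refine ⟨hv.lowerSemicontinuousOn, ⟨(hv.mono ?_).lowerSemicontinuousOn, hsuper⟩,
    fun z hz => ?_, fun t ht z hz => ?_⟩
  · exact prod_mono Ioo_subset_Ico_self subset_closure
  · rw [henv (0, z) ⟨left_mem_Ico.mpr hT, hz⟩]
    exact ⟨(hinit z hz).2, le_rfl, (hinit z hz).1⟩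
  · rw [henv (t, z) ⟨ht, frontier_subset_closure hz⟩]
    exact ⟨(hlat t ht z hz).2, le_rfl, (hlat t ht z hz).1⟩

protected theorem LipschitzInT.min {v w : ℝ × (Fin n → ℂ) → ℝ} (hv : LipschitzInT Ω T v)
    (hw : LipschitzInT Ω T w) : LipschitzInT Ω T fun p => min (v p) (w p) := by
  obtain ⟨Lv, hLv⟩ := hv
  obtain ⟨Lw, hLw⟩ := hw
  refine ⟨max Lv Lw, fun s hs t ht z hz => (abs_min_sub_min_le_max _ _ _ _).trans ?_⟩
  rw [max_mul_of_nonneg _ _ (abs_nonneg _)]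
  exact max_le_max (hLv s hs t ht z hz) (hLw s hs t ht z hz)

theorem lipschitzInT_add_mul_time (u : (Fin n → ℂ) → ℝ) (c C : ℝ) :
    LipschitzInT Ω T fun p => u p.2 + (c + C * p.1) :=
  ⟨|C|, fun s _ t _ z _ => by
    rw [← abs_mul, mul_sub, add_sub_add_left_eq_sub, add_sub_add_left_eq_sub]⟩

theorem lipschitzInT_of_contDiff (hΩ : Bornology.IsBounded Ω) {v : ℝ × (Fin n → ℂ) → ℝ}
    (hv : ContDiff ℝ 1 v) : LipschitzInT Ω T v := by
  obtain ⟨L, hL⟩ := hv.locallyLipschitz.locallyLipschitzOn.exists_lipschitzOnWith_of_compact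
    ((isCompact_Icc (a := (0 : ℝ)) (b := T)).prod hΩ.isCompact_closure)
  refine ⟨L, fun s hs t ht z hz => ?_⟩
  have hdist := hL.dist_le_mul (s, z) ⟨Ico_subset_Icc_self hs, hz⟩ (t, z)
    ⟨Ico_subset_Icc_self ht, hz⟩
  simpa [Prod.dist_eq, Real.dist_eq] using hdist

end Barrier

section Construction

variable {ι E : Type*} [Fintype ι] [NormedAddCommGroup E] [NormedSpace ℝ E]

theorem exists_contDiff_pos_laplacianAlong_neg (b : Module.Basis ι ℝ E) {ρ : E → ℝ}
    (hρ : ContDiff ℝ 2 ρ) {S : Set E} (hS : IsCompact S) (hzero : ∀ z ∈ S, ρ z = 0)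
    (hgrad : ∀ z ∈ S, fderiv ℝ ρ z ≠ 0) :
    ∃ w : E → ℝ, ContDiff ℝ 2 w ∧ (∀ z, ρ z < 0 → 0 < w z) ∧
      ∀ z ∈ S, w z = 0 ∧ laplacianAlong b w z < 0 := by
  obtain ⟨K, hlap, hK⟩ := ((eventually_forall_lt_mul hS
    (continuous_laplacianAlong (e := b) hρ).neg.continuousOn
    (continuous_gradSqAlong (e := b) hρ).continuousOn (fun _ _ => gradSqAlong_nonneg)
    fun z hz hcrit => absurd hcrit (gradSqAlong_pos b (hgrad z hz)).ne').and
      (eventually_gt_atTop 0)).exists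
  have hderiv : deriv (fun r : ℝ => 1 - Real.exp (K * r)) = fun r => -K * Real.exp (K * r) := by
    ext r
    simpa [mul_comm] using ((((hasDerivAt_id r).const_mul K).exp).const_sub 1).deriv
  have hderiv₂ : deriv (fun r : ℝ => -K * Real.exp (K * r)) 0 = -K ^ 2 := by
    simpa [pow_two] using ((((hasDerivAt_id (0 : ℝ)).const_mul K).exp).const_mul (-K)).deriv
  refine ⟨fun z => 1 - Real.exp (K * ρ z), by fun_prop, fun z hz => ?_, fun z hz => ⟨?_, ?_⟩⟩
  · exact sub_pos.mpr (Real.exp_lt_one_iff.mpr (mul_neg_of_pos_of_neg hK hz))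
  · simp [hzero z hz]
  · rw [laplacianAlong_comp (h := fun r => 1 - Real.exp (K * r)) (by fun_prop) hρ, hzero z hz,
      hderiv, hderiv₂]
    calc -K ^ 2 * gradSqAlong b ρ z + -K * Real.exp (K * 0) * laplacianAlong b ρ z
        = K * (-laplacianAlong b ρ z - K * gradSqAlong b ρ z) := by
          rw [mul_zero, Real.exp_zero]
          ring
      _ < 0 := mul_neg_of_pos_of_neg hK (sub_neg.mpr (hlap z hz))

theorem exists_contDiff_pos_laplacianAlong_neg_frontier (b : Module.Basis ι ℝ E) {ρ : E → ℝ}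
    (hρ : ContDiff ℝ 2 ρ) (hcompact : IsCompact (frontier {z | ρ z < 0}))
    (hgrad : ∀ z ∈ frontier {z | ρ z < 0}, fderiv ℝ ρ z ≠ 0) :
    ∃ w : E → ℝ, ContDiff ℝ 2 w ∧
      (∀ z ∈ closure {z | ρ z < 0}, z ∉ frontier {z | ρ z < 0} → 0 < w z) ∧
      ∀ z ∈ frontier {z | ρ z < 0}, w z = 0 ∧ laplacianAlong b w z < 0 := by
  obtain ⟨w, hw, hwpos, hwneg⟩ := exists_contDiff_pos_laplacianAlong_neg b hρ hcompact
    (frontier_lt_subset_eq hρ.continuous continuous_const) hgrad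
  refine ⟨w, hw, fun z hz hzf => hwpos z ?_, hwneg⟩
  exact interior_subset (s := {z | ρ z < 0}) ((closure_sdiff_frontier _).subset ⟨hz, hzf⟩)

theorem exists_lateral_barrier [FiniteDimensional ℝ E] (e : ι → E) {D S : Set E} (hD : IsCompact D)
    (hS : IsCompact S) {w : E → ℝ} (hw : ContDiff ℝ 2 w)
    (hwpos : ∀ z ∈ D, z ∉ S → 0 < w z) (hwS : ∀ z ∈ S, w z = 0 ∧ laplacianAlong e w z < 0)
    {T : ℝ} (hT : 0 ≤ T) {a : ℝ × E → ℝ} (ha : ContinuousOn a (Icc 0 T ×ˢ D)) {φ : ℝ → E → ℝ}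
    (hφ : ContinuousOn (fun p : ℝ × E => φ p.1 p.2) (Icc 0 T ×ˢ S)) {u₀ : E → ℝ}
    (hu₀ : ContinuousOn u₀ D) (hu₀φ : ∀ z ∈ S, u₀ z ≤ φ 0 z) {ε : ℝ} (hε : 0 < ε) :
    ∃ b : ℝ × E → ℝ, ContDiff ℝ 2 b ∧
      (∀ t ∈ Icc 0 T, ∀ z ∈ S, φ t z ≤ b (t, z) ∧ b (t, z) ≤ φ t z + ε) ∧
      (∀ z ∈ D, u₀ z ≤ b (0, z)) ∧
      ∀ p ∈ Icc 0 T ×ˢ D, a p < b p ∨ laplacianAlong e (fun z => b (p.1, z)) p.2 < 0 := by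
  obtain ⟨ψ, hψ_smooth, hψφ⟩ := exists_contDiff_lt_lt_add (isCompact_Icc.prod hS) hφ hε
  have hψ : ContDiff ℝ 2 ψ := contDiff_infty.mp hψ_smooth 2
  have hslice (t : ℝ) : ContDiff ℝ 2 fun z => ψ (t, z) := hψ.comp (contDiff_prodMk_right t)
  have hlapψ : Continuous fun p : ℝ × E => laplacianAlong e (fun z => ψ (p.1, z)) p.2 := by
    simpa only [laplacianAlong_slice hψ] using continuous_laplacianAlong hψ
  have hinit : ∀ᶠ A in (atTop : Filter ℝ), ∀ z ∈ D, u₀ z - ψ (0, z) < A * w z := by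
    refine eventually_forall_lt_mul hD (hu₀.sub (hslice 0).continuous.continuousOn)
      hw.continuous.continuousOn (fun z hz => ?_) fun z hz hz0 => ?_
    · by_cases hzS : z ∈ S
      exacts [(hwS z hzS).1.ge, (hwpos z hz hzS).le]
    · have hzS : z ∈ S := by_contra fun hzS => (hwpos z hz hzS).ne' hz0
      linarith [hu₀φ z hzS, (hψφ (0, z) ⟨left_mem_Icc.mpr hT, hzS⟩).1]
  have hdich : ∀ᶠ A in (atTop : Filter ℝ), ∀ p ∈ Icc 0 T ×ˢ D, a p - ψ p < A * w p.2 ∨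
      laplacianAlong e (fun z => ψ (p.1, z)) p.2 < A * -laplacianAlong e w p.2 := by
    refine eventually_forall_lt_mul_or_lt_mul (isCompact_Icc.prod hD)
      (ha.sub hψ.continuous.continuousOn) (hw.continuous.comp continuous_snd).continuousOn
      hlapψ.continuousOn
      ((continuous_laplacianAlong hw).comp continuous_snd).neg.continuousOn fun p hp => ?_
    by_cases hpS : p.2 ∈ S
    exacts [.inr (neg_pos.mpr (hwS p.2 hpS).2), .inl (hwpos p.2 hp.2 hpS)]
  obtain ⟨A, hAinit, hAdich⟩ := (hinit.and hdich).exists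
  refine ⟨fun p => ψ p + A * w p.2, by fun_prop, fun t ht z hz => ?_, fun z hz => ?_,
    fun p hp => (hAdich p hp).imp (fun hlt => ?_) fun hlt => ?_⟩
  · obtain ⟨hlo, hhi⟩ := hψφ (t, z) ⟨ht, hz⟩
    simpa [(hwS z hz).1] using And.intro hlo.le hhi.le
  · linarith [hAinit z hz]
  · linarith
  · rw [laplacianAlong_add (hslice p.1).contDiffAt (contDiff_const.mul hw).contDiffAt,
      laplacianAlong_const_mul A hw.contDiffAt]
    linarith

theorem exists_interior_barrier {n : ℕ} {f : (Fin n → ℝ) → ℝ} {Γ : Set (Fin n → ℝ)}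
    {Ω : Set (Fin n → ℂ)} (hΩ : Bornology.IsBounded Ω) {T : ℝ} {G : ℝ → (Fin n → ℂ) → ℝ → ℝ}
    (hGc : ContinuousOn (fun p : ℝ × (Fin n → ℂ) × ℝ => G p.1 p.2.1 p.2.2)
      (Icc 0 T ×ˢ closure Ω ×ˢ univ))
    (hGm : ∀ t z, Monotone (G t z)) {g : (Fin n → ℂ) → ℝ} (hg : ∀ z ∈ Ω, 0 ≤ g z)
    {φ : ℝ → (Fin n → ℂ) → ℝ}
    (hφ : ContinuousOn (fun p : ℝ × (Fin n → ℂ) => φ p.1 p.2) (Icc 0 T ×ˢ frontier Ω))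
    {u₀ : (Fin n → ℂ) → ℝ} (hu₀φ : ∀ z ∈ frontier Ω, φ 0 z ≤ u₀ z)
    (hadm : Admissible f Γ Ω g u₀) {ε : ℝ} (hε : 0 < ε) :
    ∃ a : ℝ × (Fin n → ℂ) → ℝ, ContinuousOn a (Icc 0 T ×ˢ closure Ω) ∧ LipschitzInT Ω T a ∧
      (∀ p ∈ Ioo 0 T ×ˢ Ω, ParSupersolAt f Γ G g a p) ∧
      (∀ z ∈ closure Ω, u₀ z ≤ a (0, z) ∧ a (0, z) ≤ u₀ z + ε) ∧
      ∀ t ∈ Icc 0 T, ∀ z ∈ frontier Ω, φ t z ≤ a (t, z) := by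
  obtain ⟨u, K, -, hu, huu₀, hsuper⟩ := hadm (ε / 2) (half_pos hε)
  have hcompact : IsCompact (Icc 0 T ×ˢ closure Ω) := isCompact_Icc.prod hΩ.isCompact_closure
  have hu_snd : ContinuousOn (fun p : ℝ × (Fin n → ℂ) => u p.2) (Icc 0 T ×ˢ closure Ω) :=
    hu.comp continuousOn_snd fun _ hp => hp.2
  obtain ⟨m, hm⟩ : ∃ m, ∀ p ∈ Icc 0 T ×ˢ closure Ω, m ≤ G p.1 p.2 (u p.2) := by
    have hG : ContinuousOn (fun p => G p.1 p.2 (u p.2)) (Icc 0 T ×ˢ closure Ω) :=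
      hGc.comp (continuousOn_fst.prodMk (continuousOn_snd.prodMk hu_snd))
        fun p hp => ⟨hp.1, hp.2, mem_univ _⟩
    obtain ⟨m, hm⟩ := hcompact.bddBelow_image hG
    exact ⟨m, fun p hp => hm (mem_image_of_mem _ hp)⟩
  have hlat : ∀ᶠ C in (atTop : Filter ℝ), ∀ p ∈ Icc 0 T ×ˢ frontier Ω,
      φ p.1 p.2 - u p.2 - ε / 2 < C * p.1 := by
    have hsub : Icc 0 T ×ˢ frontier Ω ⊆ Icc 0 T ×ˢ closure Ω :=
      prod_mono_right frontier_subset_closure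
    refine eventually_forall_lt_mul (hcompact.of_isClosed_subset
      (isClosed_Icc.prod isClosed_frontier) hsub)
      ((hφ.sub (hu_snd.mono hsub)).sub continuousOn_const) continuousOn_fst (fun p hp => hp.1.1) ?_
    rintro ⟨t, z⟩ hp (rfl : t = 0)
    linarith [hu₀φ z hp.2, (huu₀ z (frontier_subset_closure hp.2)).1]
  obtain ⟨C, hC, hCm, hC0⟩ :=
    (hlat.and ((eventually_ge_atTop (K - m)).and (eventually_ge_atTop 0))).exists
  refine ⟨fun p => u p.2 + (ε / 2 + C * p.1), hu_snd.add (by fun_prop),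
    lipschitzInT_add_mul_time u _ C, fun p hp => ?_, fun z hz => ?_, fun t ht z hz => ?_⟩
  · refine parSupersolAt_add_mul_time (hsuper p.2 hp.2) (hg p.2 hp.2) ?_
    have hmono : G p.1 p.2 (u p.2) ≤ G p.1 p.2 (u p.2 + (ε / 2 + C * p.1)) :=
      hGm _ _ (le_add_of_nonneg_right (add_nonneg (half_pos hε).le (mul_nonneg hC0 hp.1.1.le)))
    linarith [hm p ⟨Ioo_subset_Icc_self hp.1, subset_closure hp.2⟩]
  · constructor <;> simp only [mul_zero] <;> linarith [huu₀ z hz]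
  · linarith [hC (t, z) ⟨ht, hz⟩]

end Construction

theorem stmt18_general {n : ℕ} {Γ : Set (Fin n → ℝ)} {f : (Fin n → ℝ) → ℝ} (hΓ : Γ ⊆ GammaK n 1)
    {Ω : Set (Fin n → ℂ)} (hΩ : Bornology.IsBounded Ω) {T : ℝ} (hT : 0 < T)
    {G : ℝ → (Fin n → ℂ) → ℝ → ℝ}
    (hGc : ContinuousOn (fun p : ℝ × (Fin n → ℂ) × ℝ => G p.1 p.2.1 p.2.2)
      (Icc 0 T ×ˢ closure Ω ×ˢ univ))
    (hGm : ∀ t z, Monotone (G t z)) {g : (Fin n → ℂ) → ℝ} (hg : ∀ z ∈ Ω, 0 ≤ g z)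
    {φ : ℝ → (Fin n → ℂ) → ℝ}
    (hφ : ContinuousOn (fun p : ℝ × (Fin n → ℂ) => φ p.1 p.2) (Icc 0 T ×ˢ frontier Ω))
    {u₀ : (Fin n → ℂ) → ℝ} (hu₀ : ContinuousOn u₀ (closure Ω))
    (hu₀φ : ∀ z ∈ frontier Ω, u₀ z = φ 0 z)
    (hsmooth : ∃ ρ : (Fin n → ℂ) → ℝ, ContDiff ℝ 2 ρ ∧ Ω = {z | ρ z < 0} ∧
      ∀ z ∈ frontier Ω, fderiv ℝ ρ z ≠ 0)
    (hadm : Admissible f Γ Ω g u₀) {ε : ℝ} (hε : 0 < ε) :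
    ∃ v : ℝ × (Fin n → ℂ) → ℝ, ContinuousOn v (Ico 0 T ×ˢ closure Ω) ∧ LipschitzInT Ω T v ∧
      SuperBarrier f Γ G g Ω T φ u₀ ε v := by
  have hfrontier : IsCompact (frontier Ω) :=
    hΩ.isCompact_closure.of_isClosed_subset isClosed_frontier frontier_subset_closure
  obtain ⟨ρ, hρ, rfl, hgrad⟩ := hsmooth
  obtain ⟨w, hw, hwΩ, hwbdy⟩ :=
    exists_contDiff_pos_laplacianAlong_neg_frontier (realBasis n) hρ hfrontier hgrad
  obtain ⟨a, hac, haLip, hasuper, hainit, halat⟩ :=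
    exists_interior_barrier hΩ hGc hGm hg hφ (fun z hz => (hu₀φ z hz).ge) hadm hε
  obtain ⟨b, hb, hblat, hbinit, hab⟩ :=
    exists_lateral_barrier (realBasis n) hΩ.isCompact_closure hfrontier hw hwΩ
      hwbdy hT.le hac hφ hu₀ (fun z hz => (hu₀φ z hz).le) hε
  have hvc : ContinuousOn (fun p => min (a p) (b p)) (Ico 0 T ×ˢ closure {z | ρ z < 0}) :=
    (hac.mono (prod_mono_left Ico_subset_Icc_self)).inf hb.continuous.continuousOn
  refine ⟨fun p => min (a p) (b p), hvc,
    haLip.min (lipschitzInT_of_contDiff hΩ (hb.of_le one_le_two)),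
    superBarrier_of_continuousOn hT hvc (fun p hp => ?_) (fun z hz => ?_) fun t ht z hz => ?_⟩
  · exact (hasuper p hp).min ((hab p ⟨Ioo_subset_Icc_self hp.1, subset_closure hp.2⟩).imp_right
      (parSupersolAt_of_laplacianAlong_neg hΓ (by fun_prop)))
  · exact ⟨le_min (hainit z hz).1 (hbinit z hz), min_le_of_left_le (hainit z hz).2⟩
  · have ht' := Ico_subset_Icc_self ht
    exact ⟨le_min (halat t ht' z hz) (hblat t ht' z hz).1, min_le_of_right_le (hblat t ht' z hz).2⟩

/-- existence of continuous ε-superbarriers, Lipschitz in time, for a bounded smooth domain and an admissible pair (u₀, g). -/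
theorem stmt18
    {n : ℕ} (hn : 1 ≤ n) (Γ : Set (Fin n → ℝ)) (f : (Fin n → ℝ) → ℝ)
    (hΓ : IsGammaCone n Γ) (hf : IsHessianDensity n Γ f)
    (Ω : Set (Fin n → ℂ)) (hΩo : IsOpen Ω) (hΩb : Bornology.IsBounded Ω)
    (hΩc : IsConnected Ω) (T : ℝ) (hT : 0 < T)
    (G : ℝ → (Fin n → ℂ) → ℝ → ℝ)
    (hGc : ContinuousOn (fun p : ℝ × (Fin n → ℂ) × ℝ => G p.1 p.2.1 p.2.2)
      (Set.Icc 0 T ×ˢ closure Ω ×ˢ Set.univ))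
    (hGm : ∀ t z, Monotone (fun r => G t z r))
    (g : (Fin n → ℂ) → ℝ) (hgc : ContinuousOn g Ω)
    (hg0 : ∀ z ∈ Ω, 0 ≤ g z) (hgb : ∃ C, ∀ z ∈ Ω, g z ≤ C)
    (φ : ℝ → (Fin n → ℂ) → ℝ)
    (hφc : ContinuousOn (fun p : ℝ × (Fin n → ℂ) => φ p.1 p.2) (Set.Icc 0 T ×ˢ frontier Ω))
    (u₀ : (Fin n → ℂ) → ℝ) (hu₀c : ContinuousOn u₀ (closure Ω))
    (hu₀sh : GammaSubharmonicOn Γ Ω u₀)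
    (hu₀φ : ∀ z ∈ frontier Ω, u₀ z = φ 0 z)
    (hsmooth : ∃ ρ : (Fin n → ℂ) → ℝ, ContDiff ℝ (⊤ : ℕ∞) ρ ∧
      Ω = {z | ρ z < 0} ∧ ∀ z ∈ frontier Ω, fderiv ℝ ρ z ≠ 0)
    (hadm : Admissible f Γ Ω g u₀) :
    ∀ ε > 0, ∃ v : ℝ × (Fin n → ℂ) → ℝ,
      ContinuousOn v (Set.Ico 0 T ×ˢ closure Ω) ∧ LipschitzInT Ω T v ∧
        SuperBarrier f Γ G g Ω T φ u₀ ε v := by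
  obtain ⟨ρ, hρ, hΩρ, hgrad⟩ := hsmooth
  exact fun ε hε => stmt18_general hΓ.2.2.2.2.2.2 hΩb hT hGc hGm hg0 hφc hu₀c hu₀φ
    ⟨ρ, contDiff_infty.mp hρ 2, hΩρ, hgrad⟩ hadm hε
end
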